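/- arXiv:2003.09977 — 3 statements merged into one kernel-verified Lean document; each statement's English description precedes it below -/
import Mathlib

section
/- Let h ∈ ℤ[X] be monic irreducible with h(0) ≠ 0, let K = ℚ[X]/(h), let α be the class of X, and let q be a positive integer such that q·α^{-1} is integral over ℤ. Let r ≥ 1 be an integer such that ℚ(α^r) = K. Set R_h = ℤ[α, q·α^{-1}] and R_g = ℤ[α^r, q^r·α^{-r}], subrings of K. Then R_g ⊆ R_h, and for any two nonzero finitely generated R_h-submodules I and J of K: every R_g-linear map I → J is R_h-linear, and I and J are isomorphic as R_h-modules if and only if they are isomorphic as R_g-modules. -/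
open Polynomial

set_option synthInstance.maxHeartbeats 1000000
set_option maxHeartbeats 1600000

/-- The number field `K = ℚ[X]/(h)` attached to an integer polynomial `h`. -/
abbrev NumFld (h : Polynomial ℤ) : Type := AdjoinRoot (h.map (Int.castRingHom ℚ))

/-- The class `α` of `X` in `ℚ[X]/(h)`. -/
noncomputable abbrev rootCls (h : Polynomial ℤ) : NumFld h :=
  AdjoinRoot.root (h.map (Int.castRingHom ℚ))

lemma exists_int_mul_mem {K : Type*} [Field K] [Algebra ℚ K] (S : Subalgebra ℤ K) (b : K)
    (hb : IsIntegral ℚ b) (hS : b ∈ S) (hgen : IntermediateField.adjoin ℚ {b} = ⊤) (a : K) :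
    ∃ n : ℤ, n ≠ 0 ∧ (n : K) * a ∈ S := by
  have ha : a ∈ Algebra.adjoin ℚ {b} := by
    rw [← IntermediateField.adjoin_simple_toSubalgebra_of_isAlgebraic hb.isAlgebraic, hgen]
    trivial
  induction ha using Algebra.adjoin_induction with
  | mem x hx =>
    rw [Set.mem_singleton_iff] at hx
    subst hx
    exact ⟨1, one_ne_zero, by simpa using hS⟩
  | algebraMap t =>
    refine ⟨t.den, by exact_mod_cast t.den_nz, ?_⟩
    have h1 : (((t.den : ℤ) : K)) * algebraMap ℚ K t = ((t.num : ℤ) : K) := by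
      have h2 := congrArg (algebraMap ℚ K) (Rat.den_mul_eq_num t)
      rw [map_mul, map_natCast, map_intCast] at h2
      rw [Int.cast_natCast]
      exact h2
    rw [h1]
    exact intCast_mem S _
  | add x y _ _ hx hy =>
    obtain ⟨m, hm, hx⟩ := hx
    obtain ⟨n, hn, hy⟩ := hy
    refine ⟨m * n, mul_ne_zero hm hn, ?_⟩
    have : ((m * n : ℤ) : K) * (x + y) = (n : K) * (m * x) + (m : K) * (n * y) := by
      push_cast; ring
    rw [this]
    exact S.add_mem (S.mul_mem (intCast_mem S _) hx) (S.mul_mem (intCast_mem S _) hy)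
  | mul x y _ _ hx hy =>
    obtain ⟨m, hm, hx⟩ := hx
    obtain ⟨n, hn, hy⟩ := hy
    refine ⟨m * n, mul_ne_zero hm hn, ?_⟩
    have : ((m * n : ℤ) : K) * (x * y) = (m * x) * (n * y) := by
      push_cast; ring
    rw [this]
    exact S.mul_mem hx hy

/-- Additive maps between subgroups that commute with `Rg` commute with everything. -/
lemma linear_ext {K : Type*} [Field K] [CharZero K] (S T : Subalgebra ℤ K)
    (hST : ∀ a : K, ∃ n : ℤ, n ≠ 0 ∧ (n : K) * a ∈ S)
    (I J : Submodule T K) (φ : I →+ J)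
    (hφ : ∀ a ∈ S, ∀ x y : I, (y : K) = a * (x : K) → (φ y : K) = a * (φ x : K))
    (a : K) (x y : I) (hxy : (y : K) = a * (x : K)) : (φ y : K) = a * (φ x : K) := by
  obtain ⟨n, hn, hna⟩ := hST a
  have h1 := hφ _ hna x (n • y) (by
    rw [Submodule.coe_smul_of_tower, hxy, zsmul_eq_mul, mul_assoc])
  rw [map_zsmul, Submodule.coe_smul_of_tower, zsmul_eq_mul, mul_assoc] at h1
  exact mul_left_cancel₀ (Int.cast_ne_zero.mpr hn) h1

/-- Let `h ∈ ℤ[X]` be monic irreducible with `h(0) ≠ 0`, `K = ℚ[X]/(h)`, `α` the class of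
`X`, `q > 0` with `q·α⁻¹` integral over `ℤ`, and `r ≥ 1` with `ℚ(α^r) = K`. Set
`R_h = ℤ[α, q·α⁻¹]` and `R_g = ℤ[α^r, q^r·α^{-r}]`. Then `R_g ⊆ R_h`, and for any two
nonzero finitely generated `R_h`-submodules `I`, `J` of `K`: every `R_g`-linear map
`I → J` is `R_h`-linear, and `I ≅ J` as `R_h`-modules iff `I ≅ J` as `R_g`-modules. -/
theorem statement_4 (h : Polynomial ℤ) (hmonic : h.Monic) (hh0 : h.eval 0 ≠ 0)
    [hirr : Fact (Irreducible (h.map (Int.castRingHom ℚ)))]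
    (q : ℕ) (hq : 0 < q)
    (hint : IsIntegral ℤ ((q : NumFld h) * (rootCls h)⁻¹))
    (r : ℕ) (hr : 1 ≤ r)
    (hgen : IntermediateField.adjoin ℚ {(rootCls h) ^ r} = ⊤) :
    letI Rh : Subalgebra ℤ (NumFld h) :=
      Algebra.adjoin ℤ {rootCls h, (q : NumFld h) * (rootCls h)⁻¹}
    letI Rg : Subalgebra ℤ (NumFld h) :=
      Algebra.adjoin ℤ {(rootCls h) ^ r, (q : NumFld h) ^ r * ((rootCls h)⁻¹) ^ r}
    Rg ≤ Rh ∧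
    ∀ I J : Submodule Rh (NumFld h), I ≠ ⊥ → I.FG → J ≠ ⊥ → J.FG →
      ((∀ φ : I →+ J,
        (∀ a ∈ Rg, ∀ x y : I, (y : NumFld h) = a * (x : NumFld h) →
          (φ y : NumFld h) = a * (φ x : NumFld h)) →
        (∀ a ∈ Rh, ∀ x y : I, (y : NumFld h) = a * (x : NumFld h) →
          (φ y : NumFld h) = a * (φ x : NumFld h))) ∧
      (Nonempty (I ≃ₗ[Rh] J) ↔
        ∃ e : I ≃+ J, ∀ a ∈ Rg, ∀ x y : I, (y : NumFld h) = a * (x : NumFld h) →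
          (e y : NumFld h) = a * (e x : NumFld h))) := by
  set Rh : Subalgebra ℤ (NumFld h) :=
    Algebra.adjoin ℤ {rootCls h, (q : NumFld h) * (rootCls h)⁻¹} with hRh
  set Rg : Subalgebra ℤ (NumFld h) :=
    Algebra.adjoin ℤ {(rootCls h) ^ r, (q : NumFld h) ^ r * ((rootCls h)⁻¹) ^ r} with hRg
  have hle : Rg ≤ Rh := by
    refine Algebra.adjoin_le ?_
    have h1 : rootCls h ∈ Rh := Algebra.subset_adjoin (by simp)
    have h2 : (q : NumFld h) * (rootCls h)⁻¹ ∈ Rh := Algebra.subset_adjoin (by simp)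
    rintro x (rfl | hx)
    · exact Rh.pow_mem h1 r
    · rw [Set.mem_singleton_iff] at hx
      rw [hx, ← mul_pow]
      exact Rh.pow_mem h2 r
  refine ⟨hle, ?_⟩
  have hz : CharZero (NumFld h) := algebraRat.charZero _
  have hroot : IsIntegral ℚ (rootCls h) :=
    ⟨h.map (Int.castRingHom ℚ), hmonic.map _, AdjoinRoot.eval₂_root _⟩
  have hden : ∀ a : NumFld h, ∃ n : ℤ, n ≠ 0 ∧ (n : NumFld h) * a ∈ Rg :=
    exists_int_mul_mem Rg _ (hroot.pow r) (Algebra.subset_adjoin (by simp)) hgen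
  intro I J _ _ _ _
  refine ⟨fun φ hφ a _ x y hxy => linear_ext Rg Rh hden I J φ hφ a x y hxy, ?_, ?_⟩
  · rintro ⟨e⟩
    refine ⟨e.toAddEquiv, fun a ha x y hxy => ?_⟩
    have h1 : y = (⟨a, hle ha⟩ : Rh) • x := Subtype.ext hxy
    have h2 : e y = (⟨a, hle ha⟩ : Rh) • e x := by rw [h1, map_smul]
    exact congrArg Subtype.val h2
  · rintro ⟨e, he⟩
    refine ⟨{ e with map_smul' := fun c x => ?_ }⟩
    exact Subtype.ext (linear_ext Rg Rh hden I J e.toAddMonoidHom he c x (c • x) rfl)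
end

section
/- Let K = ℚ[X]/(X⁶ − X³ + 8) and let α be the class of X in K. Then K is a number field of degree 6, the subring ℤ[α, 2·α^{-1}] of K generated by α and 2·α^{-1} equals the ring of integers of K, and the class group of K has exactly 3 elements. -/
namespace S11

/-- The element with coordinates `c` with respect to `1, A³, A, B², B, A²`. -/
def el {S : Type*} [CommRing S] (A B : S) (c : Fin 6 → S) : S :=
  c 0 + c 1 * A ^ 3 + c 2 * A + c 3 * B ^ 2 + c 4 * B + c 5 * A ^ 2

/-- The matrix of multiplication by `el A B c`. -/
def mm {S : Type*} [CommRing S] (c : Fin 6 → S) : Matrix (Fin 6) (Fin 6) S :=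
  !![c 0, -8 * c 1, 2 * c 4, c 4 + 4 * c 5, 2 * c 2 + c 3, 4 * c 3;
     c 1, c 0 + c 1, c 5, -c 4, -c 3, c 2;
     c 2, c 2 + 4 * c 3, c 0 + c 1, 4 * c 1, 2 * c 5, 2 * c 4 + c 5;
     c 3, -2 * c 2, -2 * c 1, c 0, c 4, -2 * c 5;
     c 4, -4 * c 5, 2 * c 3, 2 * c 2 + c 3, c 0, -4 * c 1;
     c 5, 2 * c 4 + c 5, c 2, -2 * c 3, 2 * c 1, c 0 + c 1]

/-- First coordinate of the relative norm. -/
def nmM {S : Type*} [CommRing S] (c : Fin 6 → S) : S :=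
  c 0 ^ 3 - 24 * c 0 * c 1 ^ 2 - 8 * c 1 ^ 3
    + 12 * c 2 ^ 2 * c 3 + 6 * c 2 * c 3 ^ 2 - 7 * c 3 ^ 3
    + c 4 ^ 3 + 12 * c 4 ^ 2 * c 5 - 8 * c 5 ^ 3
    - (c 0 * (6 * c 2 * c 4 + 12 * c 3 * c 5 + 3 * c 3 * c 4)
      - 8 * c 1 * (3 * c 2 * c 5 - 3 * c 3 * c 4))

/-- Second coordinate of the relative norm. -/
def nmN {S : Type*} [CommRing S] (c : Fin 6 → S) : S :=
  3 * c 0 ^ 2 * c 1 + 3 * c 0 * c 1 ^ 2 - 7 * c 1 ^ 3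
    + c 2 ^ 3 - 6 * c 2 * c 3 ^ 2 - c 3 ^ 3
    - c 4 ^ 3 + 6 * c 4 * c 5 ^ 2 + c 5 ^ 3
    - (c 0 * (3 * c 2 * c 5 - 3 * c 3 * c 4) + c 1 * (6 * c 2 * c 4 + 12 * c 3 * c 5 + 3 * c 3 * c 4)
      + c 1 * (3 * c 2 * c 5 - 3 * c 3 * c 4))

/-- The norm form. -/
def nf {S : Type*} [CommRing S] (c : Fin 6 → S) : S :=
  nmM c ^ 2 + nmM c * nmN c + 8 * nmN c ^ 2

set_option maxHeartbeats 4000000 in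
theorem det_mm {S : Type*} [CommRing S] (c : Fin 6 → S) : (mm c).det = nf c := by
  unfold mm nf nmM nmN
  generalize c 0 = x0
  generalize c 1 = x1
  generalize c 2 = x2
  generalize c 3 = x3
  generalize c 4 = x4
  generalize c 5 = x5
  simp [Matrix.det_succ_row_zero, Fin.sum_univ_succ, Fin.succAbove, Matrix.submatrix]
  ring

theorem el_mul {S : Type*} [CommRing S] {A B : S} (h2 : A * B = 2) (h3 : A ^ 3 + B ^ 3 = 1)
    (c d : Fin 6 → S) : el A B c * el A B d = el A B ((mm c).mulVec d) := by
  have hB : B ^ 3 = 1 - A ^ 3 := by linear_combination h3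
  have e11 : A ^ 3 * A ^ 3 = A ^ 3 - 8 := by
    linear_combination A ^ 3 * h3 - (A ^ 2 * B ^ 2 + 2 * A * B + 4) * h2
  have e12 : A ^ 3 * A = A - 2 * B ^ 2 := by linear_combination A * h3 - B ^ 2 * h2
  have e13 : A ^ 3 * B ^ 2 = 4 * A := by linear_combination (A ^ 2 * B + 2 * A) * h2
  have e14 : A ^ 3 * B = 2 * A ^ 2 := by linear_combination (A ^ 2) * h2
  have e15 : A ^ 3 * A ^ 2 = A ^ 2 - 4 * B := by
    linear_combination A ^ 2 * h3 - (A * B ^ 2 + 2 * B) * h2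
  have e23 : A * B ^ 2 = 2 * B := by linear_combination B * h2
  have e33 : B ^ 2 * B ^ 2 = B - 2 * A ^ 2 := by linear_combination B * h3 - A ^ 2 * h2
  have e34 : B ^ 2 * B = 1 - A ^ 3 := by linear_combination h3
  have e35 : A ^ 2 * B ^ 2 = 4 := by linear_combination (A * B + 2) * h2
  have e45 : A ^ 2 * B = 2 * A := by linear_combination A * h2
  have e55 : A ^ 2 * A ^ 2 = A - 2 * B ^ 2 := by linear_combination A * h3 - B ^ 2 * h2
  simp only [el, mm, Matrix.mulVec, dotProduct, Fin.sum_univ_six, Matrix.of_apply, Matrix.cons_val]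
  linear_combination (c 1 * d 1) * e11 + (c 1 * d 2 + c 2 * d 1) * e12
    + (c 1 * d 3 + c 3 * d 1) * e13 + (c 1 * d 4 + c 4 * d 1) * e14 + (c 1 * d 5 + c 5 * d 1) * e15
    + (c 2 * d 3 + c 3 * d 2) * e23 + (c 2 * d 4 + c 4 * d 2) * h2 + c 3 * d 3 * e33
    + (c 3 * d 4 + c 4 * d 3) * e34 + (c 3 * d 5 + c 5 * d 3) * e35
    + (c 4 * d 5 + c 5 * d 4) * e45 + c 5 * d 5 * e55

/-- The basis vectors. -/
def ev {S : Type*} [CommRing S] (A B : S) : Fin 6 → S := ![1, A ^ 3, A, B ^ 2, B, A ^ 2]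

section K
variable {K : Type*} [Field K] [Algebra ℚ K]

/-- rational coordinates -/
def elQ (A B : K) (c : Fin 6 → ℚ) : K := el A B (fun i => algebraMap ℚ K (c i))

theorem elQ_eq_sum (A B : K) (c : Fin 6 → ℚ) : elQ A B c = ∑ i, c i • ev A B i := by
  simp [elQ, el, ev, Fin.sum_univ_six, Algebra.smul_def]

theorem mm_map {S T : Type*} [CommRing S] [CommRing T] (f : S →+* T) (c : Fin 6 → S) :
    mm (fun i => f (c i)) = (mm c).map f := by
  ext i j
  fin_cases i <;> fin_cases j <;> simp [mm, map_ofNat]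

theorem nf_map {S T : Type*} [CommRing S] [CommRing T] (f : S →+* T) (c : Fin 6 → S) :
    nf (fun i => f (c i)) = f (nf c) := by
  simp [nf, nmM, nmN, map_ofNat]

theorem el_map {S T : Type*} [CommRing S] [CommRing T] (f : S →+* T) (A B : S) (c : Fin 6 → S) :
    el (f A) (f B) (fun i => f (c i)) = f (el A B c) := by
  simp [el]

theorem elQ_mul {A B : K} (h2 : A * B = 2) (h3 : A ^ 3 + B ^ 3 = 1)
    (c d : Fin 6 → ℚ) : elQ A B c * elQ A B d = elQ A B ((mm c).mulVec d) := by
  unfold elQ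
  rw [el_mul h2 h3, mm_map]
  congr 1
  ext i
  simp [Matrix.mulVec, dotProduct, -eq_ratCast, map_sum]

theorem span_top {A B : K} (h2 : A * B = 2) (h3 : A ^ 3 + B ^ 3 = 1)
    (hgen : IntermediateField.adjoin ℚ {A} = ⊤) (z : K) : ∃ c : Fin 6 → ℚ, z = elQ A B c := by
  have hint : IsIntegral ℚ A := by
    refine ⟨Polynomial.X ^ 6 - Polynomial.X ^ 3 + Polynomial.C 8, ?_, ?_⟩
    · monicity!
    · simp
      have hB : B ^ 3 = 1 - A ^ 3 := by linear_combination h3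
      linear_combination A ^ 3 * h3 - (A ^ 2 * B ^ 2 + 2 * A * B + 4) * h2
  have hz : z ∈ Algebra.adjoin ℚ {A} := by
    have := IntermediateField.adjoin_simple_toSubalgebra_of_isAlgebraic (F := ℚ) (E := K) hint.isAlgebraic
    rw [← this, hgen]; trivial
  induction hz using Algebra.adjoin_induction with
  | mem x hx =>
    refine ⟨![0, 0, 1, 0, 0, 0], ?_⟩
    simp only [Set.mem_singleton_iff] at hx
    simp [elQ, el, hx]
  | algebraMap r =>
    refine ⟨![r, 0, 0, 0, 0, 0], ?_⟩
    simp [elQ, el]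
  | add x y _ _ hx hy =>
    obtain ⟨c, rfl⟩ := hx
    obtain ⟨d, rfl⟩ := hy
    refine ⟨fun i => c i + d i, ?_⟩
    simp [elQ, el, -eq_ratCast]; ring
  | mul x y _ _ hx hy =>
    obtain ⟨c, rfl⟩ := hx
    obtain ⟨d, rfl⟩ := hy
    exact ⟨_, elQ_mul h2 h3 c d⟩

theorem span_ev {A B : K} (h2 : A * B = 2) (h3 : A ^ 3 + B ^ 3 = 1)
    (hgen : IntermediateField.adjoin ℚ {A} = ⊤) : ⊤ ≤ Submodule.span ℚ (Set.range (ev A B)) := by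
  intro z _
  obtain ⟨c, rfl⟩ := span_top h2 h3 hgen z
  rw [elQ_eq_sum]
  exact Submodule.sum_mem _ fun i _ => Submodule.smul_mem _ _ (Submodule.subset_span ⟨i, rfl⟩)

theorem rat_root_int {P : Polynomial ℤ} (hP : P.Monic) {q : ℚ} (h : Polynomial.aeval q P = 0) :
    ∃ n : ℤ, (n : ℚ) = q := by
  have : IsIntegral ℤ q := ⟨P, hP, h⟩
  obtain ⟨n, hn⟩ := IsIntegrallyClosed.isIntegral_iff.mp this
  exact ⟨n, by simpa using hn⟩

theorem dvd_finrank [FiniteDimensional ℚ K] (x : K) (P : Polynomial ℚ) (hP : Irreducible P)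
    (hm : P.Monic) (hx : Polynomial.aeval x P = 0) : P.natDegree ∣ Module.finrank ℚ K := by
  have h1 : minpoly ℚ x = P := (minpoly.eq_of_irreducible_of_monic hP hx hm).symm
  have hi : IsIntegral ℚ x := ⟨P, hm, hx⟩
  have h2 := IntermediateField.adjoin.finrank hi
  rw [h1] at h2
  rw [← h2, ← Module.finrank_mul_finrank ℚ (IntermediateField.adjoin ℚ {x}) K]
  exact dvd_mul_right _ _

theorem finrank_eq {A B : K} (h2 : A * B = 2) (h3 : A ^ 3 + B ^ 3 = 1)
    (hgen : IntermediateField.adjoin ℚ {A} = ⊤) : Module.finrank ℚ K = 6 := by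
  have hfin : FiniteDimensional ℚ K :=
    FiniteDimensional.of_surjective (Fintype.linearCombination ℚ (ev A B)) (by
      intro z
      obtain ⟨c, rfl⟩ := span_top h2 h3 hgen z
      exact ⟨c, by rw [elQ_eq_sum]; rfl⟩)
  have hle : Module.finrank ℚ K ≤ 6 := by
    have := finrank_le_of_span_eq_top (R := ℚ) (top_le_iff.mp (span_ev h2 h3 hgen))
    simpa using this
  have hpos : 0 < Module.finrank ℚ K := Module.finrank_pos
  have d2 : 2 ∣ Module.finrank ℚ K := by
    have hd : (Polynomial.X ^ 2 - Polynomial.X + Polynomial.C 8 : Polynomial ℚ).natDegree = 2 := by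
      compute_degree!
    have hm : (Polynomial.X ^ 2 - Polynomial.X + Polynomial.C 8 : Polynomial ℚ).Monic := by
      monicity!
    rw [← hd]
    refine dvd_finrank (A ^ 3) _ ?_ hm ?_
    · rw [Polynomial.irreducible_iff_roots_eq_zero_of_degree_le_three (by omega) (by omega)]
      rw [Multiset.eq_zero_iff_forall_notMem]
      intro q hq
      have := (Polynomial.mem_roots'.mp hq).2
      simp [Polynomial.IsRoot] at this
      nlinarith [sq_nonneg (2 * q - 1)]
    · simp
      linear_combination A ^ 3 * h3 - (A ^ 2 * B ^ 2 + 2 * A * B + 4) * h2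
  have d3 : 3 ∣ Module.finrank ℚ K := by
    have hd : (Polynomial.X ^ 3 - Polynomial.C 6 * Polynomial.X - 1 : Polynomial ℚ).natDegree = 3 := by
      compute_degree!
    have hm : (Polynomial.X ^ 3 - Polynomial.C 6 * Polynomial.X - 1 : Polynomial ℚ).Monic := by
      monicity!
    rw [← hd]
    refine dvd_finrank (A + B) _ ?_ hm ?_
    · rw [Polynomial.irreducible_iff_roots_eq_zero_of_degree_le_three (by omega) (by omega)]
      rw [Multiset.eq_zero_iff_forall_notMem]
      intro q hq
      have := (Polynomial.mem_roots'.mp hq).2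
      simp [Polynomial.IsRoot] at this
      obtain ⟨n, rfl⟩ := rat_root_int
        (P := (Polynomial.X ^ 3 - Polynomial.C 6 * Polynomial.X - 1 : Polynomial ℤ)) (by monicity!) (q := q)
        (by simpa [map_ofNat] using this)
      have h' : n ^ 3 - 6 * n - 1 = 0 := by exact_mod_cast this
      have hn : n * (n ^ 2 - 6) = 1 := by linear_combination h'
      rcases Int.eq_one_or_neg_one_of_mul_eq_one hn with rfl | rfl <;> norm_num at h'
    · simp
      linear_combination h3 + (3 * (A + B)) * h2
  omega

end K

section K
variable {K : Type*} [Field K] [Algebra ℚ K]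

theorem exists_basis {A B : K} (h2 : A * B = 2) (h3 : A ^ 3 + B ^ 3 = 1)
    (hgen : IntermediateField.adjoin ℚ {A} = ⊤) :
    ∃ b : Module.Basis (Fin 6) ℚ K, ⇑b = ev A B :=
  ⟨basisOfTopLeSpanOfCardEqFinrank (ev A B) (span_ev h2 h3 hgen)
    (by rw [finrank_eq h2 h3 hgen]; simp), by simp⟩

theorem elQ_ev (A B : K) (j : Fin 6) : ev A B j = elQ A B (Pi.single j 1) := by
  rw [elQ_eq_sum]
  simp [Pi.single_apply]

theorem leftMul {A B : K} (h2 : A * B = 2) (h3 : A ^ 3 + B ^ 3 = 1)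
    (b : Module.Basis (Fin 6) ℚ K) (hb : ⇑b = ev A B) (c : Fin 6 → ℚ) :
    Algebra.leftMulMatrix b (elQ A B c) = mm c := by
  ext i j
  rw [Algebra.leftMulMatrix_eq_repr_mul, hb, elQ_ev, elQ_mul h2 h3, elQ_eq_sum, ← hb,
    Module.Basis.repr_sum_self]
  simp

theorem norm_elQ {A B : K} (h2 : A * B = 2) (h3 : A ^ 3 + B ^ 3 = 1)
    (hgen : IntermediateField.adjoin ℚ {A} = ⊤) (c : Fin 6 → ℚ) :
    Algebra.norm ℚ (elQ A B c) = nf c := by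
  obtain ⟨b, hb⟩ := exists_basis h2 h3 hgen
  rw [Algebra.norm_eq_matrix_det b, leftMul h2 h3 b hb, det_mm]

theorem trace_elQ {A B : K} (h2 : A * B = 2) (h3 : A ^ 3 + B ^ 3 = 1)
    (hgen : IntermediateField.adjoin ℚ {A} = ⊤) (c : Fin 6 → ℚ) :
    Algebra.trace ℚ K (elQ A B c) = 6 * c 0 + 3 * c 1 := by
  obtain ⟨b, hb⟩ := exists_basis h2 h3 hgen
  rw [Algebra.trace_eq_matrix_trace b, leftMul h2 h3 b hb]
  simp [Matrix.trace, mm, Fin.sum_univ_six]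
  ring

theorem elQ_inj {A B : K} (h2 : A * B = 2) (h3 : A ^ 3 + B ^ 3 = 1)
    (hgen : IntermediateField.adjoin ℚ {A} = ⊤) {c d : Fin 6 → ℚ}
    (h : elQ A B c = elQ A B d) : c = d := by
  obtain ⟨b, hb⟩ := exists_basis h2 h3 hgen
  ext i
  rw [elQ_eq_sum, elQ_eq_sum, ← hb] at h
  have := congrArg (fun x => b.repr x i) h
  simpa only [Module.Basis.repr_sum_self] using this

theorem fd {A B : K} (h2 : A * B = 2) (h3 : A ^ 3 + B ^ 3 = 1)
    (hgen : IntermediateField.adjoin ℚ {A} = ⊤) : FiniteDimensional ℚ K :=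
  FiniteDimensional.of_finrank_pos (by rw [finrank_eq h2 h3 hgen]; norm_num)

theorem int_of_integral {q : ℚ} (h : IsIntegral ℤ q) : ∃ n : ℤ, q = n := by
  obtain ⟨n, hn⟩ := IsIntegrallyClosed.isIntegral_iff.mp h
  exact ⟨n, by simpa using hn.symm⟩

theorem trace_int {A B : K} (h2 : A * B = 2) (h3 : A ^ 3 + B ^ 3 = 1)
    (hgen : IntermediateField.adjoin ℚ {A} = ⊤) (c : Fin 6 → ℚ)
    (hc : IsIntegral ℤ (elQ A B c)) : ∃ n : ℤ, 6 * c 0 + 3 * c 1 = n := by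
  have := fd h2 h3 hgen
  rw [← trace_elQ h2 h3 hgen]
  exact int_of_integral (Algebra.isIntegral_trace hc)

theorem norm_int {A B : K} (h2 : A * B = 2) (h3 : A ^ 3 + B ^ 3 = 1)
    (hgen : IntermediateField.adjoin ℚ {A} = ⊤) (c : Fin 6 → ℚ)
    (hc : IsIntegral ℤ (elQ A B c)) : ∃ n : ℤ, nf c = n := by
  have := fd h2 h3 hgen
  rw [← norm_elQ h2 h3 hgen]
  exact int_of_integral (Algebra.isIntegral_norm ℚ hc)

theorem integral_AB {A B : K} (h2 : A * B = 2) (h3 : A ^ 3 + B ^ 3 = 1) :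
    IsIntegral ℤ A ∧ IsIntegral ℤ B := by
  constructor
  · refine ⟨Polynomial.X ^ 6 - Polynomial.X ^ 3 + Polynomial.C 8, ?_, ?_⟩
    · monicity!
    · simp
      linear_combination A ^ 3 * h3 - (A ^ 2 * B ^ 2 + 2 * A * B + 4) * h2
  · refine ⟨Polynomial.X ^ 6 - Polynomial.X ^ 3 + Polynomial.C 8, ?_, ?_⟩
    · monicity!
    · simp
      linear_combination B ^ 3 * h3 - (A ^ 2 * B ^ 2 + 2 * A * B + 4) * h2

/-- integer coordinates -/
def elZ {S : Type*} [CommRing S] (A B : S) (c : Fin 6 → ℤ) : S := el A B (fun i => (c i : S))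

theorem elQ_int (A B : K) (c : Fin 6 → ℤ) : elQ A B (fun i => (c i : ℚ)) = elZ A B c := by
  simp [elQ, elZ]

theorem elZ_integral {A B : K} (h2 : A * B = 2) (h3 : A ^ 3 + B ^ 3 = 1) (c : Fin 6 → ℤ) :
    IsIntegral ℤ (elZ A B c) := by
  obtain ⟨hA, hB⟩ := integral_AB h2 h3
  have hi : ∀ n : ℤ, IsIntegral ℤ (n : K) := fun n => by
    simpa using (isIntegral_algebraMap (R := ℤ) (A := K) (x := n))
  unfold elZ el
  exact ((((((hi _).add ((hi _).mul (hA.pow _))).add ((hi _).mul hA)).add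
    ((hi _).mul (hB.pow _))).add ((hi _).mul hB)).add ((hi _).mul (hA.pow _)))

theorem elZ_mul {S : Type*} [CommRing S] {A B : S} (h2 : A * B = 2) (h3 : A ^ 3 + B ^ 3 = 1)
    (c d : Fin 6 → ℤ) : elZ A B c * elZ A B d = elZ A B ((mm c).mulVec d) := by
  unfold elZ
  have hm := mm_map (Int.castRingHom S) c
  simp only [eq_intCast] at hm
  rw [el_mul h2 h3, hm]
  congr 1
  ext i
  simp [Matrix.mulVec, dotProduct]

theorem key31 (a b c : ℤ) (h1 : (31 : ℤ) ∣ 6 * a ^ 2 + 24 * (b * c))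
    (h2 : (31 : ℤ) ∣ 24 * (a * c) + 3 * b ^ 2) (h3 : (31 : ℤ) ∣ 24 * (a * b) + 3 * c ^ 2) :
    (31 : ℤ) ∣ a ∧ (31 : ℤ) ∣ b ∧ (31 : ℤ) ∣ c := by
  have p31 : Prime (31 : ℤ) := by norm_num
  obtain ⟨x, hx⟩ := h1
  obtain ⟨y, hy⟩ := h2
  obtain ⟨z, hz⟩ := h3
  have hbc : (31 : ℤ) ∣ 2313 * (b ^ 2 * c ^ 2) :=
    ⟨96 * b * c * x - 31 * y * z + 3 * c ^ 2 * y + 3 * b ^ 2 * z, by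
      linear_combination 96 * b * c * hx - (24 * (a * b) + 3 * c ^ 2) * hy - 31 * y * hz
        + 3 * c ^ 2 * hy + 3 * b ^ 2 * hz⟩
  have sq : ∀ k t : ℤ, ¬ (31 : ℤ) ∣ k → (31 : ℤ) ∣ k * t ^ 2 → (31 : ℤ) ∣ t := fun k t hk h =>
    p31.dvd_of_dvd_pow ((p31.dvd_or_dvd h).resolve_left hk)
  have hbc' : (31 : ℤ) ∣ b * c := sq 2313 (b * c) (by norm_num) (by rwa [mul_pow])
  rcases p31.dvd_or_dvd hbc' with ⟨t, rfl⟩ | ⟨t, rfl⟩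
  · refine ⟨sq 6 a (by norm_num) ⟨x - 24 * t * c, by linear_combination hx⟩, ⟨t, rfl⟩,
      sq 3 c (by norm_num) ⟨z - 24 * a * t, by linear_combination hz⟩⟩
  · refine ⟨sq 6 a (by norm_num) ⟨x - 24 * t * b, by linear_combination hx⟩,
      sq 3 b (by norm_num) ⟨y - 24 * a * t, by linear_combination hy⟩, ⟨t, rfl⟩⟩

theorem trace_mul {A B : K} (h2 : A * B = 2) (h3 : A ^ 3 + B ^ 3 = 1)
    (hgen : IntermediateField.adjoin ℚ {A} = ⊤) (c : Fin 6 → ℚ)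
    (hc : IsIntegral ℤ (elQ A B c)) (d : Fin 6 → ℤ) :
    ∃ n : ℤ, 6 * (mm c).mulVec (fun i => (d i : ℚ)) 0 + 3 * (mm c).mulVec (fun i => (d i : ℚ)) 1
      = n := by
  apply trace_int h2 h3 hgen
  rw [← elQ_mul h2 h3, elQ_int]
  exact hc.mul (elZ_integral h2 h3 d)

theorem three_mul {A B : K} (h2 : A * B = 2) (h3 : A ^ 3 + B ^ 3 = 1)
    (hgen : IntermediateField.adjoin ℚ {A} = ⊤) (c : Fin 6 → ℚ)
    (hc : IsIntegral ℤ (elQ A B c)) : ∃ n : Fin 6 → ℤ, ∀ i, 3 * c i = n i := by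
  obtain ⟨m0, e0⟩ := trace_mul h2 h3 hgen c hc ![1, 0, 0, 0, 0, 0]
  obtain ⟨m1, e1⟩ := trace_mul h2 h3 hgen c hc ![0, 1, 0, 0, 0, 0]
  obtain ⟨m2, e2⟩ := trace_mul h2 h3 hgen c hc ![0, 0, 0, 0, 1, 0]
  obtain ⟨m3, e3⟩ := trace_mul h2 h3 hgen c hc ![0, 0, 0, 0, 0, 1]
  obtain ⟨m4, e4⟩ := trace_mul h2 h3 hgen c hc ![0, 0, 1, 0, 0, 0]
  obtain ⟨m5, e5⟩ := trace_mul h2 h3 hgen c hc ![0, 0, 0, 1, 0, 0]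
  simp [mm, Matrix.mulVec, dotProduct, Fin.sum_univ_six] at e0 e1 e2 e3 e4 e5
  set w : Fin 6 → ℚ := ![(15 * m0 + m1) / 31, -2 * (15 * m0 + m1) / 31, (8 * m2 - m3) / 31,
    -4 * (8 * m2 - m3) / 31, (8 * m4 - m5) / 31, -4 * (8 * m4 - m5) / 31] with hw
  have hwi : IsIntegral ℤ (elQ A B w) := by
    have h : elQ A B w = 3 * elQ A B c - elZ A B ![0, m0, 0, m2, 0, m4] := by
      have : (3 : K) * elQ A B c = elQ A B (fun i => 3 * c i) := by
        simp [elQ, el, -eq_ratCast, map_ofNat]; ring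
      rw [this, ← elQ_int]
      have : w = fun i => 3 * c i - (![0, m0, 0, m2, 0, m4] i : ℤ) := by
        ext i
        fin_cases i <;> simp [hw] <;> linarith
      rw [this]
      simp [elQ, el, -eq_ratCast]; ring
    rw [h]
    have i3 : IsIntegral ℤ (3 : K) := by
      simpa using (isIntegral_algebraMap (R := ℤ) (A := K) (x := 3))
    exact (i3.mul hc).sub (elZ_integral h2 h3 _)
  have hw2 : IsIntegral ℤ (elQ A B ((mm w).mulVec w)) := by
    rw [← elQ_mul h2 h3]; exact hwi.mul hwi
  obtain ⟨f0, g0⟩ := trace_mul h2 h3 hgen _ hw2 ![1, 0, 0, 0, 0, 0]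
  obtain ⟨f1, g1⟩ := trace_mul h2 h3 hgen _ hw2 ![0, 0, 1, 0, 0, 0]
  obtain ⟨f2, g2⟩ := trace_mul h2 h3 hgen _ hw2 ![0, 0, 0, 0, 1, 0]
  simp [mm, Matrix.mulVec, dotProduct, Fin.sum_univ_six, hw] at g0 g1 g2
  have k := key31 (15 * m0 + m1) (-(8 * m2 - m3)) (8 * m4 - m5)
    ⟨-f0, by
      have : (6 * (15 * m0 + m1 : ℚ) ^ 2 + 24 * (-(8 * m2 - m3 : ℚ) * (8 * m4 - m5))) = 31 * -f0 := by
        rw [← g0]; ring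
      exact_mod_cast this⟩
    ⟨-f1, by
      have : (24 * ((15 * m0 + m1 : ℚ) * (8 * m4 - m5)) + 3 * (-(8 * m2 - m3 : ℚ)) ^ 2) = 31 * -f1 := by
        rw [← g1]; ring
      exact_mod_cast this⟩
    ⟨-f2, by
      have : (24 * ((15 * m0 + m1 : ℚ) * (-(8 * m2 - m3 : ℚ))) + 3 * (8 * m4 - m5 : ℚ) ^ 2) = 31 * -f2 := by
        rw [← g2]; ring
      exact_mod_cast this⟩
  obtain ⟨⟨a, ha⟩, ⟨b, hb⟩, ⟨g, hg⟩⟩ := k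
  have ha' : (15 * m0 + m1 : ℚ) = 31 * a := by exact_mod_cast ha
  have hb' : (-(8 * m2 - m3) : ℚ) = 31 * b := by exact_mod_cast hb
  have hg' : (8 * m4 - m5 : ℚ) = 31 * g := by exact_mod_cast hg
  refine ⟨![a, m0 - 2 * a, -b, m2 + 4 * b, g, m4 - 4 * g], fun i => ?_⟩
  fin_cases i <;> simp <;> linarith
end K

theorem mod3 : ∀ x0 x1 x2 x3 x4 x5 : ZMod 3, nf ![x0, x1, x2, x3, x4, x5] = 0 →
    (mm ![-2, 0, 2, -1, 2, -1]).mulVec ![x0, x1, x2, x3, x4, x5] = 0 := by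
  decide +kernel

theorem div_t (c : Fin 6 → ℤ) (h : (3 : ℤ) ∣ nf c) :
    ∃ d : Fin 6 → ℤ, c = (mm ![2, 0, 1, 0, 1, 0]).mulVec d := by
  have h0 : nf (fun i => (c i : ZMod 3)) = 0 := by
    have := nf_map (Int.castRingHom (ZMod 3)) c
    simp only [eq_intCast] at this
    rw [this]
    exact (ZMod.intCast_zmod_eq_zero_iff_dvd _ 3).mpr h
  have hv : (fun i => (c i : ZMod 3)) = ![(c 0 : ZMod 3), c 1, c 2, c 3, c 4, c 5] := by
    ext i; fin_cases i <;> rfl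
  rw [hv] at h0
  have h1 := mod3 _ _ _ _ _ _ h0
  have h2 : ∀ i, ∃ y, ((mm ![-2, 0, 2, -1, 2, -1]).mulVec c) i = 3 * y := by
    intro i
    have h3 := congrFun h1 i
    apply (ZMod.intCast_zmod_eq_zero_iff_dvd _ 3).mp
    rw [← hv] at h3
    have hm := mm_map (Int.castRingHom (ZMod 3)) ![-2, 0, 2, -1, 2, -1]
    have h4 : (fun i => (Int.castRingHom (ZMod 3)) ((![-2, 0, 2, -1, 2, -1] : Fin 6 → ℤ) i))
        = ![-2, 0, 2, -1, 2, -1] := by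
      ext i; fin_cases i <;> simp
    rw [h4] at hm
    rw [hm] at h3
    simpa [Matrix.mulVec, dotProduct] using h3
  choose y hy using h2
  refine ⟨y, ?_⟩
  have e0 := hy 0
  have e1 := hy 1
  have e2 := hy 2
  have e3 := hy 3
  have e4 := hy 4
  have e5 := hy 5
  simp [mm, Matrix.mulVec, dotProduct, Fin.sum_univ_six] at e0 e1 e2 e3 e4 e5
  ext i
  fin_cases i <;> simp [mm, Matrix.mulVec, dotProduct, Fin.sum_univ_six] <;> omega

section K
variable {K : Type*} [Field K] [Algebra ℚ K]

theorem nf_mul_int {A B : K} (h2 : A * B = 2) (h3 : A ^ 3 + B ^ 3 = 1)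
    (hgen : IntermediateField.adjoin ℚ {A} = ⊤) (c d : Fin 6 → ℤ) :
    nf ((mm c).mulVec d) = nf c * nf d := by
  have hz : ∀ c : Fin 6 → ℤ, ((nf c : ℤ) : ℚ) = Algebra.norm ℚ (elZ A B c) := fun c => by
    rw [← elQ_int, norm_elQ h2 h3 hgen]
    exact (nf_map (Int.castRingHom ℚ) c).symm
  have : ((nf ((mm c).mulVec d) : ℤ) : ℚ) = (nf c : ℤ) * (nf d : ℤ) := by
    rw [hz, hz, hz, ← map_mul, elZ_mul h2 h3]
  exact_mod_cast this

theorem maxOrder {A B : K} (h2 : A * B = 2) (h3 : A ^ 3 + B ^ 3 = 1)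
    (hgen : IntermediateField.adjoin ℚ {A} = ⊤) (z : K) (hz : IsIntegral ℤ z) :
    ∃ n : Fin 6 → ℤ, z = elZ A B n := by
  have : CharZero K := algebraRat.charZero K
  obtain ⟨c, rfl⟩ := span_top h2 h3 hgen z
  obtain ⟨n, hn⟩ := three_mul h2 h3 hgen c hz
  obtain ⟨N, hN⟩ := norm_int h2 h3 hgen c hz
  have hnN : nf n = 729 * N := by
    have : ((nf n : ℤ) : ℚ) = 729 * N := by
      have h := nf_map (Int.castRingHom ℚ) n
      simp only [eq_intCast] at h
      rw [← h, ← hN]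
      simp only [← hn]
      simp only [nf, nmM, nmN]
      ring
    exact_mod_cast this
  have ht : nf (![2, 0, 1, 0, 1, 0] : Fin 6 → ℤ) = 9 := by decide
  obtain ⟨n1, rfl⟩ := div_t n (by omega)
  rw [nf_mul_int h2 h3 hgen, ht] at hnN
  obtain ⟨n2, rfl⟩ := div_t n1 (by omega)
  rw [nf_mul_int h2 h3 hgen, ht] at hnN
  obtain ⟨n3, rfl⟩ := div_t n2 (by omega)
  refine ⟨(mm ![11, 0, 6, 2, 6, 2]).mulVec n3, ?_⟩
  have e1 : 3 * elQ A B c = elZ A B ((mm ![2, 0, 1, 0, 1, 0]).mulVec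
      ((mm ![2, 0, 1, 0, 1, 0]).mulVec ((mm ![2, 0, 1, 0, 1, 0]).mulVec n3))) := by
    rw [← elQ_int]
    simp only [← hn]
    simp [elQ, el, -eq_ratCast, map_ofNat]; ring
  rw [← elZ_mul h2 h3, ← elZ_mul h2 h3, ← elZ_mul h2 h3] at e1
  rw [← elZ_mul h2 h3]
  have e2 : elZ A B ![2, 0, 1, 0, 1, 0] ^ 3 = 3 * elZ A B ![11, 0, 6, 2, 6, 2] := by
    simp [elZ, el]
    linear_combination h3 + (3 * A + 3 * B + 12) * h2
  have h3' : (3 : K) ≠ 0 := by norm_num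
  apply mul_left_cancel₀ h3'
  rw [e1]
  linear_combination (elZ A B n3) * e2

theorem adjoin_eq {A B : K} (h2 : A * B = 2) (h3 : A ^ 3 + B ^ 3 = 1)
    (hgen : IntermediateField.adjoin ℚ {A} = ⊤) :
    Algebra.adjoin ℤ ({A, B} : Set K) = integralClosure ℤ K := by
  apply le_antisymm
  · apply Algebra.adjoin_le
    obtain ⟨hA, hB⟩ := integral_AB h2 h3
    rintro x (rfl | rfl)
    · exact hA
    · exact hB
  · intro z hz
    obtain ⟨n, rfl⟩ := maxOrder h2 h3 hgen z hz
    have hA : A ∈ Algebra.adjoin ℤ ({A, B} : Set K) := Algebra.subset_adjoin (by simp)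
    have hB : B ∈ Algebra.adjoin ℤ ({A, B} : Set K) := Algebra.subset_adjoin (by simp)
    have hi : ∀ k : ℤ, (k : K) ∈ Algebra.adjoin ℤ ({A, B} : Set K) := fun k => intCast_mem _ k
    unfold elZ el
    exact add_mem (add_mem (add_mem (add_mem (add_mem (hi _) (mul_mem (hi _) (pow_mem hA _)))
      (mul_mem (hi _) hA)) (mul_mem (hi _) (pow_mem hB _))) (mul_mem (hi _) hB))
      (mul_mem (hi _) (pow_mem hA _))

end K

section OK
open NumberField
variable {K : Type*} [Field K] [NumberField K]

theorem elZ_map {S T : Type*} [CommRing S] [CommRing T] (f : S →+* T) (A B : S) (c : Fin 6 → ℤ) :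
    f (elZ A B c) = elZ (f A) (f B) c := by
  simp [elZ, el]

theorem elZ_coe (a b : 𝓞 K) (c : Fin 6 → ℤ) : ((elZ a b c : 𝓞 K) : K) = elZ (a : K) (b : K) c :=
  elZ_map (algebraMap (𝓞 K) K) a b c

theorem OK_rep {a b : 𝓞 K} (h2 : (a : K) * b = 2) (h3 : (a : K) ^ 3 + (b : K) ^ 3 = 1)
    (hgen : IntermediateField.adjoin ℚ {(a : K)} = ⊤) (x : 𝓞 K) :
    ∃ n : Fin 6 → ℤ, x = elZ a b n := by
  obtain ⟨n, hn⟩ := maxOrder h2 h3 hgen (x : K) (RingOfIntegers.isIntegral_coe x)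
  refine ⟨n, ?_⟩
  apply RingOfIntegers.ext
  rw [hn, elZ_coe]

theorem OK_norm {a b : 𝓞 K} (h2 : (a : K) * b = 2) (h3 : (a : K) ^ 3 + (b : K) ^ 3 = 1)
    (hgen : IntermediateField.adjoin ℚ {(a : K)} = ⊤) (n : Fin 6 → ℤ) :
    Ideal.absNorm (Ideal.span {elZ a b n}) = (nf n).natAbs := by
  rw [Ideal.absNorm_span_singleton]
  congr 1
  have : ((Algebra.norm ℤ (elZ a b n) : ℤ) : ℚ) = (nf n : ℤ) := by
    rw [Algebra.coe_norm_int, elZ_coe, ← elQ_int, norm_elQ h2 h3 hgen]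
    exact nf_map (Int.castRingHom ℚ) n
  exact_mod_cast this

theorem OK_trace {a b : 𝓞 K} (h2 : (a : K) * b = 2) (h3 : (a : K) ^ 3 + (b : K) ^ 3 = 1)
    (hgen : IntermediateField.adjoin ℚ {(a : K)} = ⊤) (n : Fin 6 → ℤ) :
    Algebra.trace ℤ (𝓞 K) (elZ a b n) = 6 * n 0 + 3 * n 1 := by
  have : ((Algebra.trace ℤ (𝓞 K) (elZ a b n) : ℤ) : ℚ) = 6 * (n 0 : ℤ) + 3 * (n 1 : ℤ) := by
    rw [Algebra.coe_trace_int, elZ_coe, ← elQ_int, trace_elQ h2 h3 hgen]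
  exact_mod_cast this

theorem elZ_eq_sum {S : Type*} [CommRing S] (A B : S) (c : Fin 6 → ℤ) :
    elZ A B c = ∑ i, c i • ev A B i := by
  simp [elZ, el, ev, Fin.sum_univ_six]

theorem OK_basis {a b : 𝓞 K} (h2 : (a : K) * b = 2) (h3 : (a : K) ^ 3 + (b : K) ^ 3 = 1)
    (hgen : IntermediateField.adjoin ℚ {(a : K)} = ⊤) :
    ∃ v : Module.Basis (Fin 6) ℤ (𝓞 K), ⇑v = ev a b := by
  have hli : LinearIndependent ℤ (ev a b) := by
    rw [Fintype.linearIndependent_iff]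
    intro g hg i
    rw [← elZ_eq_sum] at hg
    have h : elQ (a : K) b (fun i => (g i : ℚ)) = elQ (a : K) b (fun _ => 0) := by
      rw [elQ_int, ← elZ_coe, hg]
      simp [elQ, el]
    have := congrFun (elQ_inj h2 h3 hgen h) i
    exact_mod_cast this
  refine ⟨Module.Basis.mk hli ?_, Module.Basis.coe_mk _ _⟩
  intro x _
  obtain ⟨n, rfl⟩ := OK_rep h2 h3 hgen x
  rw [elZ_eq_sum]
  exact Submodule.sum_mem _ fun i _ => Submodule.smul_mem _ _ (Submodule.subset_span ⟨i, rfl⟩)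

theorem ev_elZ {S : Type*} [CommRing S] (A B : S) (j : Fin 6) :
    ev A B j = elZ A B (Pi.single j 1) := by
  rw [elZ_eq_sum]
  simp [Pi.single_apply]

theorem OK_two {a b : 𝓞 K} (h2 : (a : K) * b = 2) : a * b = 2 := by
  apply FaithfulSMul.algebraMap_injective (𝓞 K) K
  rw [map_mul, h2]
  exact (map_ofNat (algebraMap (𝓞 K) K) 2).symm

theorem OK_one {a b : 𝓞 K} (h3 : (a : K) ^ 3 + (b : K) ^ 3 = 1) : a ^ 3 + b ^ 3 = 1 := by
  apply FaithfulSMul.algebraMap_injective (𝓞 K) K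
  rw [map_add, map_pow, map_pow, h3, map_one]

theorem OK_discr {a b : 𝓞 K} (h2 : (a : K) * b = 2) (h3 : (a : K) ^ 3 + (b : K) ^ 3 = 1)
    (hgen : IntermediateField.adjoin ℚ {(a : K)} = ⊤) : discr K = -279 ^ 3 := by
  obtain ⟨v, hv⟩ := OK_basis h2 h3 hgen
  have h2' : a * b = 2 := OK_two h2
  have h3' : a ^ 3 + b ^ 3 = 1 := OK_one h3
  rw [← discr_eq_discr K v, Algebra.discr_def]
  have : Algebra.traceMatrix ℤ v = !![6, 3, 0, 0, 0, 0; 3, -45, 0, 0, 0, 0; 0, 0, 0, 0, 12, 3;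
      0, 0, 0, 0, 3, 24; 0, 0, 12, 3, 0, 0; 0, 0, 3, 24, 0, 0] := by
    ext i j
    rw [Algebra.traceMatrix_apply, Algebra.traceForm_apply, hv, ev_elZ, ev_elZ, elZ_mul h2' h3',
      OK_trace h2 h3 hgen]
    fin_cases i <;> fin_cases j <;>
      simp [mm, Matrix.mulVec, dotProduct, Fin.sum_univ_six, Pi.single_apply]
  rw [this]
  simp [Matrix.det_succ_row_zero, Fin.sum_univ_succ, Fin.succAbove, Matrix.submatrix]

theorem minkowski {a b : 𝓞 K} (h2 : (a : K) * b = 2) (h3 : (a : K) ^ 3 + (b : K) ^ 3 = 1)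
    (hgen : IntermediateField.adjoin ℚ {(a : K)} = ⊤) (C : ClassGroup (𝓞 K)) :
    ∃ I : nonZeroDivisors (Ideal (𝓞 K)), ClassGroup.mk0 I = C ∧
      Ideal.absNorm (I : Ideal (𝓞 K)) ≤ 148 := by
  obtain ⟨I, hI, hn⟩ := exists_ideal_in_class_of_norm_le C
  refine ⟨I, hI, ?_⟩
  rw [OK_discr h2 h3 hgen, finrank_eq h2 h3 hgen] at hn
  have hr : InfinitePlace.nrComplexPlaces K ≤ 3 := by
    have := InfinitePlace.card_add_two_mul_card_eq_rank K
    rw [finrank_eq h2 h3 hgen] at this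
    omega
  have hpi : 4 / Real.pi ≤ 1.27325 := by
    rw [div_le_iff₀ Real.pi_pos]
    nlinarith [Real.pi_gt_d6]
  have hpi1 : 1 ≤ 4 / Real.pi := by
    rw [le_div_iff₀ Real.pi_pos]
    linarith [Real.pi_le_four]
  have h4 : (4 / Real.pi) ^ InfinitePlace.nrComplexPlaces K ≤ 1.27325 ^ 3 :=
    (pow_le_pow_right₀ hpi1 hr).trans (pow_le_pow_left₀ (by positivity) hpi 3)
  have hs : √|((-279 ^ 3 : ℤ) : ℝ)| ≤ 4661 := by
    apply Real.sqrt_le_iff.mpr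
    constructor
    · norm_num
    · push_cast
      rw [abs_neg, abs_of_nonneg (by positivity)]
      norm_num
  have hlt : ((Ideal.absNorm (I : Ideal (𝓞 K)) : ℕ) : ℝ) < 149 := by
    refine hn.trans_lt ?_
    calc _ ≤ (1.27325 : ℝ) ^ 3 * ((Nat.factorial 6 : ℝ) / 6 ^ 6 * 4661) := by
          gcongr
          simp
      _ < 149 := by norm_num [Nat.factorial]
  have : Ideal.absNorm (I : Ideal (𝓞 K)) < 149 := by exact_mod_cast hlt
  omega
end OK

section CG
variable {O : Type*} [CommRing O] [IsDedekindDomain O] [Module.Free ℤ O] [Module.Finite ℤ O]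

theorem eq_of_le_norm {I J : Ideal O} (h : I ≤ J) (hN : Ideal.absNorm I = Ideal.absNorm J)
    (h0 : Ideal.absNorm J ≠ 0) : I = J := by
  obtain ⟨L, rfl⟩ := Ideal.dvd_iff_le.mpr h
  rw [map_mul] at hN
  have : Ideal.absNorm L = 1 := by
    apply Nat.eq_of_mul_eq_mul_left (Nat.pos_of_ne_zero h0); simpa using hN
  rw [Ideal.absNorm_eq_one_iff] at this
  rw [this, Ideal.mul_top]

theorem Q_cube {c d e : O} (hd : 8 = c * d) (he : d + 3 = c * e) :
    Ideal.span {2, c} ^ 3 = Ideal.span {c} := by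
  have m2 : (2 : O) ∈ Ideal.span {2, c} := Ideal.subset_span (by simp)
  have mc : c ∈ Ideal.span {2, c} := Ideal.subset_span (by simp)
  apply le_antisymm
  · have h1 : Ideal.span {2, c} * Ideal.span {2, c} ≤ Ideal.span {4, c} := by
      rw [Ideal.mul_le]
      intro r hr s hs
      obtain ⟨x, y, rfl⟩ := Ideal.mem_span_pair.mp hr
      obtain ⟨z, w, rfl⟩ := Ideal.mem_span_pair.mp hs
      exact Ideal.mem_span_pair.mpr ⟨x * z, 2 * x * w + y * (z * 2 + w * c), by ring⟩
    rw [pow_three]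
    refine (Ideal.mul_mono_right h1).trans ?_
    rw [Ideal.mul_le]
    intro r hr s hs
    obtain ⟨x, y, rfl⟩ := Ideal.mem_span_pair.mp hr
    obtain ⟨z, w, rfl⟩ := Ideal.mem_span_pair.mp hs
    refine Ideal.mem_span_singleton'.mpr ⟨x * z * d + 2 * x * w + y * (z * 4 + w * c), ?_⟩
    linear_combination -(x * z) * hd
  · rw [Ideal.span_singleton_le_iff_mem]
    have k : c = (1 - c * e) * (2 * (2 * 2)) + (1 - c * e) * (2 * (2 * c))
        + e ^ 2 * (c * (c * c)) := by
      linear_combination -(1 - c * e) * hd - (1 - c * e) * c * he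
    have hm : (1 - c * e) * (2 * (2 * 2)) + (1 - c * e) * (2 * (2 * c))
        + e ^ 2 * (c * (c * c)) ∈ Ideal.span {2, c} ^ 3 := by
      rw [pow_three]
      exact add_mem
        (add_mem (Ideal.mul_mem_left _ _ (Ideal.mul_mem_mul m2 (Ideal.mul_mem_mul m2 m2)))
          (Ideal.mul_mem_left _ _ (Ideal.mul_mem_mul m2 (Ideal.mul_mem_mul m2 mc))))
        (Ideal.mul_mem_left _ _ (Ideal.mul_mem_mul mc (Ideal.mul_mem_mul mc mc)))
    rw [← k] at hm
    exact hm

theorem ringHom_of_norm (P : Ideal O) {p : ℕ} (hp : p.Prime) (hN : Ideal.absNorm P = p) :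
    ∃ φ : O →+* ZMod p, ∀ x, φ x = 0 ↔ x ∈ P := by
  have hc : Nat.card (O ⧸ P) = p := by
    rw [← hN, Ideal.absNorm_apply, Submodule.cardQuot_apply]
  have hf : Finite (O ⧸ P) := Nat.finite_of_card_ne_zero (by rw [hc]; exact hp.ne_zero)
  have : Fintype (O ⧸ P) := Fintype.ofFinite _
  let e := ZMod.ringEquivOfPrime (O ⧸ P) hp (by rw [← Nat.card_eq_fintype_card, hc])
  refine ⟨e.symm.toRingHom.comp (Ideal.Quotient.mk P), fun x => ?_⟩
  simp [Ideal.Quotient.eq_zero_iff_mem]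

theorem mk0_mem_of_mul (H : Subgroup (ClassGroup O)) {P J : Ideal O}
    (hP : P ∈ nonZeroDivisors (Ideal O)) (hJ : J ∈ nonZeroDivisors (Ideal O)) {x : O}
    (h : P * J = Ideal.span {x}) (hJH : ClassGroup.mk0 ⟨J, hJ⟩ ∈ H) :
    ClassGroup.mk0 ⟨P, hP⟩ ∈ H := by
  have h1 : ClassGroup.mk0 ⟨P, hP⟩ * ClassGroup.mk0 ⟨J, hJ⟩ = 1 := by
    rw [← map_mul]
    refine (ClassGroup.mk0_eq_one_iff (mul_mem hP hJ)).mpr ?_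
    change (P * J).IsPrincipal
    rw [h]
    exact ⟨⟨x, rfl⟩⟩
  rw [eq_inv_of_mul_eq_one_left h1]
  exact inv_mem hJH

theorem step (H : Subgroup (ClassGroup O)) {P : Ideal O}
    (hP : P ∈ nonZeroDivisors (Ideal O)) {x : O} (hx : x ∈ P)
    (hx0 : Ideal.absNorm (Ideal.span {x}) ≠ 0)
    (hlt : Ideal.absNorm (Ideal.span {x}) < Ideal.absNorm P ^ 2)
    (ih : ∀ J : Ideal O, ∀ hJ : J ∈ nonZeroDivisors (Ideal O),
      Ideal.absNorm J < Ideal.absNorm P → ClassGroup.mk0 ⟨J, hJ⟩ ∈ H) :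
    ClassGroup.mk0 ⟨P, hP⟩ ∈ H := by
  obtain ⟨J, hJ⟩ := Ideal.dvd_span_singleton.mpr hx
  rw [hJ, map_mul] at hx0 hlt
  have hJ0 : Ideal.absNorm J ≠ 0 := right_ne_zero_of_mul hx0
  have hJm : J ∈ nonZeroDivisors (Ideal O) := by
    rw [← Ideal.absNorm_ne_zero_iff_mem_nonZeroDivisors]; exact hJ0
  refine mk0_mem_of_mul H hP hJm hJ.symm (ih J hJm ?_)
  rw [sq] at hlt
  exact Nat.lt_of_mul_lt_mul_left hlt

end CG

/-- Small elements. -/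
def tab : List (Fin 6 → ℤ) := [
  ![-1, 0, 0, 0, -1, 0],
  ![-1, 0, -1, 0, 0, 0],
  ![0, 0, -1, 0, 1, 0],
  ![-1, 1, 1, 0, 0, 2],
  ![0, -1, 0, 2, 1, 0],
  ![-3, 0, -2, 1, 0, 0],
  ![-3, 0, 0, 0, -2, 1],
  ![0, 0, -2, 0, 1, 1],
  ![0, 0, -1, -1, 2, 0],
  ![-3, 1, -1, 0, 3, 0],
  ![-2, -1, 3, 0, -1, 0],
  ![0, 0, 0, -1, -1, 1],
  ![0, -1, 1, 0, -1, 0],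
  ![0, 0, -1, 0, -1, 1],
  ![0, 0, -1, -1, 0, -1],
  ![0, 0, -1, 1, -1, 0],
  ![0, 0, 0, -1, -1, -1],
  ![-2, 0, 2, -1, 1, -1],
  ![-2, 0, 1, -1, 2, -1],
  ![-3, 1, 0, -1, -2, 1],
  ![-2, -1, -2, 1, 0, -1],
  ![-1, 0, 2, -1, 1, 0],
  ![-1, 0, 1, 0, 2, -1],
  ![0, -1, 0, 0, -1, 1],
  ![-1, 1, -1, 1, 0, 0],
  ![-1, -1, 1, 0, -2, 0],
  ![-2, 0, -1, -1, -2, 0]]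

/-- Check of the degree one primes. -/
def chk (p : ℕ) : Bool :=
  (List.range p).all fun k => (k ^ 6 + 8) % p != k ^ 3 % p ||
    (List.range p).all fun l => (k * l) % p != 2 % p ||
      tab.any fun n => elZ (k : ℤ) (l : ℤ) n % (p : ℤ) == 0 && nf n != 0 && (nf n).natAbs < p ^ 2

theorem chk_all : ((List.range 149).all fun p => p < 3 || (List.range p).any (fun q => 2 ≤ q && p % q == 0) || chk p) = true := by
  decide +kernel

theorem deg_one {p : ℕ} (hp : p.Prime) (h3 : 3 ≤ p) (hle : p ≤ 148) (x y : ZMod p)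
    (hxy : x * y = 2) (hs : x ^ 3 + y ^ 3 = 1) :
    ∃ n : Fin 6 → ℤ, elZ x y n = 0 ∧ nf n ≠ 0 ∧ (nf n).natAbs < p ^ 2 := by
  have : NeZero p := ⟨hp.ne_zero⟩
  have h := List.all_eq_true.mp chk_all p (List.mem_range.mpr (by omega))
  rw [Bool.or_eq_true, Bool.or_eq_true] at h
  have hc : chk p = true := by
    rcases h with (h | h) | h
    · simp at h; omega
    · obtain ⟨q, hq, hq'⟩ := List.any_eq_true.mp h
      rw [List.mem_range] at hq
      simp at hq'
      have := (Nat.dvd_prime hp).mp (Nat.dvd_of_mod_eq_zero hq'.2)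
      omega
    · exact h
  have hx : ((x.val : ℕ) : ZMod p) = x := ZMod.natCast_zmod_val x
  have hy : ((y.val : ℕ) : ZMod p) = y := ZMod.natCast_zmod_val y
  have h1 := List.all_eq_true.mp hc x.val (List.mem_range.mpr (ZMod.val_lt x))
  have e1 : (x.val ^ 6 + 8) % p = x.val ^ 3 % p := by
    apply (ZMod.natCast_eq_natCast_iff' _ _ p).mp
    push_cast
    rw [hx]
    linear_combination x ^ 3 * hs - (x ^ 2 * y ^ 2 + 2 * x * y + 4) * hxy
  rw [Bool.or_eq_true] at h1
  have h2 := h1.resolve_left (by simp [e1])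
  have h4 := List.all_eq_true.mp h2 y.val (List.mem_range.mpr (ZMod.val_lt y))
  have e2 : (x.val * y.val) % p = 2 % p := by
    apply (ZMod.natCast_eq_natCast_iff' _ _ p).mp
    push_cast
    rw [hx, hy, hxy]
  rw [Bool.or_eq_true] at h4
  obtain ⟨n, _, hn⟩ := List.any_eq_true.mp (h4.resolve_left (by simp [e2]))
  rw [Bool.and_eq_true, Bool.and_eq_true] at hn
  obtain ⟨⟨ha, hb⟩, hd⟩ := hn
  refine ⟨n, ?_, by simpa using hb, by simpa using hd⟩
  have ha' : elZ (x.val : ℤ) (y.val : ℤ) n % (p : ℤ) = 0 := by simpa using ha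
  have h5 := (ZMod.intCast_zmod_eq_zero_iff_dvd _ p).mpr (Int.dvd_of_emod_eq_zero ha')
  have h6 := elZ_map (Int.castRingHom (ZMod p)) (x.val : ℤ) (y.val : ℤ) n
  simp only [eq_intCast, Int.cast_natCast, hx, hy] at h6
  rw [← h6]; exact h5

theorem nf_vals : nf (![0, 0, 1, 0, 0, 0] : Fin 6 → ℤ) = 8 ∧ nf (![0, 0, 0, 0, 1, 0] : Fin 6 → ℤ) = 8 ∧
    nf (![2, 0, 1, 0, 1, 0] : Fin 6 → ℤ) = 9 ∧ nf (![1, 0, 1, 0, 0, 0] : Fin 6 → ℤ) = 10 ∧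
    nf (![2, 0, 1, 0, 0, 0] : Fin 6 → ℤ) = 80 ∧ nf (![0, 1, 2, -1, -1, 2] : Fin 6 → ℤ) = 50 ∧
    nf (![-1, 1, 1, -2, -2, 1] : Fin 6 → ℤ) = 50 ∧ nf (![0, 0, 1, 1, 0, 0] : Fin 6 → ℤ) = 343 ∧
    nf (![0, 0, 0, 0, 1, 1] : Fin 6 → ℤ) = 343 := by decide

theorem deg_two {F : Type*} [Field F] [Fintype F] {p f : ℕ} (hp : p.Prime) (hc : (p : F) = 0)
    (hf : 2 ≤ f) (hcard : Fintype.card F = p ^ f) (hle : p ^ f ≤ 148) (x y : F)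
    (hxy : x * y = 2) (hs : x ^ 3 + y ^ 3 = 1) :
    ∃ n : Fin 6 → ℤ, elZ x y n = 0 ∧ nf n ≠ 0 ∧ (nf n).natAbs < (p ^ f) ^ 2 := by
  have h2le : p ^ 2 ≤ p ^ f := Nat.pow_le_pow_right hp.pos hf
  have hp12 : p ≤ 12 := by nlinarith
  have hpp : (p ^ 2) ^ 2 ≤ (p ^ f) ^ 2 := Nat.pow_le_pow_left h2le 2
  have hx6 : x ^ 6 - x ^ 3 + 8 = 0 := by
    linear_combination x ^ 3 * hs - (x ^ 2 * y ^ 2 + 2 * x * y + 4) * hxy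
  obtain ⟨v1, v2, v3, v4, v5, v6, v7, v8, v9⟩ := nf_vals
  have hcases : p = 2 ∨ p = 3 ∨ p = 5 ∨ p = 7 ∨ p = 11 := by
    interval_cases p <;> first | omega | (exfalso; revert hp; decide)
  have fin : ∀ n : Fin 6 → ℤ, elZ x y n = 0 → ∀ m : ℕ, nf n = m → m ≠ 0 → m < (p ^ 2) ^ 2 →
      ∃ n : Fin 6 → ℤ, elZ x y n = 0 ∧ nf n ≠ 0 ∧ (nf n).natAbs < (p ^ f) ^ 2 := by
    intro n h0 m hm hm0 hlt
    exact ⟨n, h0, by rw [hm]; exact_mod_cast hm0, by rw [hm]; simp; omega⟩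
  rcases hcases with rfl | rfl | rfl | rfl | rfl
  · have h0 : x * y = 0 := by rw [hxy]; exact_mod_cast hc
    rcases mul_eq_zero.mp h0 with h | h
    · exact fin _ (by simp [elZ, el, h]) 8 v1 (by norm_num) (by norm_num)
    · exact fin _ (by simp [elZ, el, h]) 8 v2 (by norm_num) (by norm_num)
  · have hc' : (3 : F) = 0 := by exact_mod_cast hc
    refine fin _ ?_ 9 v3 (by norm_num) (by norm_num)
    have : elZ x y ![2, 0, 1, 0, 1, 0] ^ 3 = 0 := by
      have e : elZ x y ![2, 0, 1, 0, 1, 0] = 2 + x + y := by simp [elZ, el]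
      rw [e]
      linear_combination hs + (3 * x + 3 * y + 12) * hxy
        + (11 + 6 * x + 6 * y + 2 * x ^ 2 + 2 * y ^ 2) * hc'
    exact pow_eq_zero_iff (by norm_num) |>.mp this
  · have hc' : (5 : F) = 0 := by exact_mod_cast hc
    have h0 : ((x - 4) * (x ^ 2 + 4 * x + 16)) * ((x - 3) * (x ^ 2 + 3 * x + 9)) = 0 := by
      linear_combination hx6 + (-18 * x ^ 3 + 344) * hc'
    rcases mul_eq_zero.mp h0 with h | h <;> rcases mul_eq_zero.mp h with h | h
    · refine fin _ ?_ 10 v4 (by norm_num) (by norm_num)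
      simp [elZ, el]
      linear_combination h + hc'
    · refine fin _ ?_ 50 v6 (by norm_num) (by norm_num)
      have hB : y = -2 * x - 8 := by
        linear_combination y * h - (x + 4) * hxy - 3 * y * hc'
      simp [elZ, el]
      rw [hB]
      linear_combination (x - 6) * h + (-4 * x + 8) * hc'
    · refine fin _ ?_ 80 v5 (by norm_num) (by norm_num)
      simp [elZ, el]
      linear_combination h + hc'
    · refine fin _ ?_ 50 v7 (by norm_num) (by norm_num)
      have hB : y = 2 * x + 6 := by
        linear_combination -y * h + (x + 3) * hxy + 2 * y * hc'
      simp [elZ, el]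
      rw [hB]
      linear_combination (x - 10) * h + (-6 * x + 1) * hc'
  · have hc' : (7 : F) = 0 := by exact_mod_cast hc
    have h0 : (x ^ 3 - 3) * (x ^ 3 - 5) = 0 := by
      linear_combination hx6 + (-x ^ 3 + 1) * hc'
    rcases mul_eq_zero.mp h0 with h | h
    · refine fin _ ?_ 343 v8 (by norm_num) (by norm_num)
      simp [elZ, el]
      linear_combination -5 * y ^ 2 * h + 5 * (x ^ 2 * y + 2 * x) * hxy + (3 * x - 2 * y ^ 2) * hc'
    · refine fin _ ?_ 343 v9 (by norm_num) (by norm_num)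
      simp [elZ, el]
      linear_combination -3 * y * h + 3 * x ^ 2 * hxy + (x ^ 2 - 2 * y) * hc'
  · exfalso
    have hc' : (11 : F) = 0 := by exact_mod_cast hc
    have hf2 : f = 2 := by
      by_contra hne
      have : 11 ^ 3 ≤ 11 ^ f := Nat.pow_le_pow_right (by norm_num) (by omega)
      omega
    have hx0 : x ≠ 0 := by
      rintro rfl
      have : (1 : F) = 0 := by linear_combination hc' + 5 * hxy
      exact one_ne_zero this
    have h120 := FiniteField.pow_card_sub_one_eq_one x hx0
    rw [hcard, hf2] at h120
    norm_num at h120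
    have b1 : (x ^ 3) ^ 2 = 3 + x ^ 3 := by linear_combination hx6 - hc'
    have b4 : (x ^ 3) ^ 4 = 1 + 7 * x ^ 3 := by
      linear_combination ((x ^ 3) ^ 2 + 3 + x ^ 3) * b1 + b1 + hc'
    have b5 : (x ^ 3) ^ 5 = 10 + 8 * x ^ 3 := by
      linear_combination x ^ 3 * b4 + 7 * b1 + hc'
    have b10 : (x ^ 3) ^ 10 = 6 + 4 * x ^ 3 := by
      linear_combination ((x ^ 3) ^ 5 + 10 + 8 * x ^ 3) * b5 + 64 * b1 + (20 * x ^ 3 + 26) * hc'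
    have b20 : (x ^ 3) ^ 20 = 7 + 9 * x ^ 3 := by
      linear_combination ((x ^ 3) ^ 10 + 6 + 4 * x ^ 3) * b10 + 16 * b1 + (5 * x ^ 3 + 7) * hc'
    have b40 : (x ^ 3) ^ 40 = 6 + 9 * x ^ 3 := by
      linear_combination ((x ^ 3) ^ 20 + 7 + 9 * x ^ 3) * b20 + 81 * b1 + (18 * x ^ 3 + 26) * hc'
    have b : 5 + 9 * x ^ 3 = 0 := by linear_combination h120 - b40
    have hb : x ^ 3 = -3 := by linear_combination 5 * b - (4 * x ^ 3 + 2) * hc'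
    rw [hb] at b1
    have : (1 : F) = 0 := by linear_combination 5 * b1 - 4 * hc'
    exact one_ne_zero this

section Fin
open NumberField
variable {K : Type*} [Field K] [NumberField K]

theorem prime_step {a b : 𝓞 K} (h2 : (a : K) * b = 2) (h3 : (a : K) ^ 3 + (b : K) ^ 3 = 1)
    (hgen : IntermediateField.adjoin ℚ {(a : K)} = ⊤) (H : Subgroup (ClassGroup (𝓞 K)))
    (P : Ideal (𝓞 K)) (hP : P ∈ nonZeroDivisors (Ideal (𝓞 K))) (hPp : P.IsPrime)
    (hle : Ideal.absNorm P ≤ 148) (hn2 : Ideal.absNorm P ≠ 2)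
    (ih : ∀ J : Ideal (𝓞 K), ∀ hJ : J ∈ nonZeroDivisors (Ideal (𝓞 K)),
      Ideal.absNorm J < Ideal.absNorm P → ClassGroup.mk0 ⟨J, hJ⟩ ∈ H) :
    ClassGroup.mk0 ⟨P, hP⟩ ∈ H := by
  have hP0 : P ≠ ⊥ := nonZeroDivisors.ne_zero hP
  have hmax : P.IsMaximal := hPp.isMaximal hP0
  have hN0 : Ideal.absNorm P ≠ 0 := Ideal.absNorm_ne_zero_iff_mem_nonZeroDivisors.mpr hP
  have hc : Nat.card (𝓞 K ⧸ P) = Ideal.absNorm P := by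
    rw [Ideal.absNorm_apply, Submodule.cardQuot_apply]
  have hfin : Finite (𝓞 K ⧸ P) := Nat.finite_of_card_ne_zero (by rw [hc]; exact hN0)
  have : Fintype (𝓞 K ⧸ P) := Fintype.ofFinite _
  let : Field (𝓞 K ⧸ P) := Ideal.Quotient.field P
  obtain ⟨p, hcp, f, hpp, hcard⟩ := FiniteField.card' (𝓞 K ⧸ P)
  have hNp : Ideal.absNorm P = p ^ (f : ℕ) := by
    rw [← hc, Nat.card_eq_fintype_card, hcard]
  have h2' : a * b = 2 := OK_two h2
  have h3' : a ^ 3 + b ^ 3 = 1 := OK_one h3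
  have main : ∃ n : Fin 6 → ℤ, elZ a b n ∈ P ∧ nf n ≠ 0 ∧ (nf n).natAbs < (Ideal.absNorm P) ^ 2 := by
    by_cases hf : (f : ℕ) = 1
    · rw [hf, pow_one] at hNp
      obtain ⟨φ, hφ⟩ := ringHom_of_norm P hpp hNp
      have hp3 : 3 ≤ p := by have := hpp.two_le; omega
      obtain ⟨n, k1, k2, k3⟩ := deg_one hpp hp3 (hNp ▸ hle) (φ a) (φ b)
        (by rw [← map_mul, h2', map_ofNat]) (by rw [← map_pow, ← map_pow, ← map_add, h3', map_one])
      refine ⟨n, ?_, k2, by rw [hNp]; exact k3⟩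
      rw [← hφ, elZ_map]
      exact k1
    · have hf2 : 2 ≤ (f : ℕ) := by have := f.pos; omega
      let φ := Ideal.Quotient.mk P
      obtain ⟨n, k1, k2, k3⟩ := deg_two hpp (CharP.cast_eq_zero _ p) hf2 hcard (hNp ▸ hle) (φ a) (φ b)
        (by rw [← map_mul, h2', map_ofNat]) (by rw [← map_pow, ← map_pow, ← map_add, h3', map_one])
      refine ⟨n, ?_, k2, by rw [hNp]; exact k3⟩
      rw [← Ideal.Quotient.eq_zero_iff_mem, elZ_map]
      exact k1
  obtain ⟨n, k1, k2, k3⟩ := main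
  refine step H hP k1 ?_ ?_ ih
  · rw [OK_norm h2 h3 hgen]; simpa using k2
  · rw [OK_norm h2 h3 hgen]; exact k3

theorem all_mem {a b : 𝓞 K} (h2 : (a : K) * b = 2) (h3 : (a : K) ^ 3 + (b : K) ^ 3 = 1)
    (hgen : IntermediateField.adjoin ℚ {(a : K)} = ⊤) (H : Subgroup (ClassGroup (𝓞 K)))
    (hbase : ∀ (P : Ideal (𝓞 K)) (hP : P ∈ nonZeroDivisors (Ideal (𝓞 K))),
      Ideal.absNorm P = 2 → ClassGroup.mk0 ⟨P, hP⟩ ∈ H) (m : ℕ) (hm : m ≤ 148) :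
    ∀ (P : Ideal (𝓞 K)) (hP : P ∈ nonZeroDivisors (Ideal (𝓞 K))),
      Ideal.absNorm P = m → ClassGroup.mk0 ⟨P, hP⟩ ∈ H := by
  induction m using Nat.strong_induction_on with
  | _ m ih =>
  intro P hP hN
  have hN0 : Ideal.absNorm P ≠ 0 := Ideal.absNorm_ne_zero_iff_mem_nonZeroDivisors.mpr hP
  by_cases htop : P = ⊤
  · subst htop
    have : ClassGroup.mk0 ⟨(⊤ : Ideal (𝓞 K)), hP⟩ = 1 :=
      (ClassGroup.mk0_eq_one_iff hP).mpr ⟨⟨1, by simp⟩⟩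
    rw [this]; exact one_mem H
  by_cases hpr : P.IsPrime
  · by_cases hn2 : Ideal.absNorm P = 2
    · exact hbase P hP hn2
    · exact prime_step h2 h3 hgen H P hP hpr (by omega) hn2 fun J hJ hlt =>
        ih _ (by omega) (by omega) J hJ rfl
  · obtain ⟨M, hM, hle⟩ := Ideal.exists_le_maximal P htop
    obtain ⟨J, hJ⟩ := Ideal.dvd_iff_le.mpr hle
    have hmul : Ideal.absNorm P = Ideal.absNorm M * Ideal.absNorm J := by rw [hJ, map_mul]
    have hM0 : Ideal.absNorm M ≠ 0 := fun h => hN0 (by rw [hmul, h, zero_mul])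
    have hJ0 : Ideal.absNorm J ≠ 0 := fun h => hN0 (by rw [hmul, h, mul_zero])
    have hM1 : Ideal.absNorm M ≠ 1 := fun h => hM.ne_top (Ideal.absNorm_eq_one_iff.mp h)
    have hJ1 : Ideal.absNorm J ≠ 1 := fun h => by
      rw [Ideal.absNorm_eq_one_iff] at h
      rw [h, Ideal.mul_top] at hJ
      exact hpr (hJ ▸ hM.isPrime)
    have l1 : Ideal.absNorm M < m := by
      rw [← hN, hmul]
      have : 2 ≤ Ideal.absNorm J := by omega
      have : 0 < Ideal.absNorm M := by omega
      nlinarith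
    have l2 : Ideal.absNorm J < m := by
      rw [← hN, hmul]
      have : 2 ≤ Ideal.absNorm M := by omega
      have : 0 < Ideal.absNorm J := by omega
      nlinarith
    have hMm : M ∈ nonZeroDivisors (Ideal (𝓞 K)) :=
      Ideal.absNorm_ne_zero_iff_mem_nonZeroDivisors.mp hM0
    have hJm : J ∈ nonZeroDivisors (Ideal (𝓞 K)) :=
      Ideal.absNorm_ne_zero_iff_mem_nonZeroDivisors.mp hJ0
    have e : (⟨P, hP⟩ : nonZeroDivisors (Ideal (𝓞 K))) = ⟨M, hMm⟩ * ⟨J, hJm⟩ := Subtype.ext hJ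
    rw [e, map_mul]
    exact mul_mem (ih _ l1 (by omega) M hMm rfl) (ih _ l2 (by omega) J hJm rfl)

theorem vals2 : nf (![-1, 0, 0, 0, 1, 0] : Fin 6 → ℤ) = 8 ∧ nf (![-1, 0, 1, 0, 0, 0] : Fin 6 → ℤ) = 8 ∧
    nf (![0, 0, -1, 1, -1, 1] : Fin 6 → ℤ) = 4 := by decide

theorem cube_one {O : Type*} [CommRing O] [IsDedekindDomain O] [Module.Free ℤ O] [Module.Finite ℤ O]
    {a b : O} (h2 : a * b = 2) (h3 : a ^ 3 + b ^ 3 = 1) :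
    Ideal.span {2, b - 1} ^ 3 = Ideal.span {b - 1} := by
  have h6 : b ^ 6 - b ^ 3 + 8 = 0 := by
    linear_combination b ^ 3 * h3 - (a ^ 2 * b ^ 2 + 2 * a * b + 4) * h2
  apply Q_cube (d := - b ^ 3 * (b ^ 2 + b + 1)) (e := -(b ^ 4 + 2 * b ^ 3 + 3 * b ^ 2 + 3 * b + 3))
  · linear_combination h6
  · ring

theorem norm_two {O : Type*} [CommRing O] [IsDedekindDomain O] [Module.Free ℤ O] [Module.Finite ℤ O]
    {I : Ideal O} {c : O} (h : I ^ 3 = Ideal.span {c}) (hc : Ideal.absNorm (Ideal.span {c}) = 8) :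
    Ideal.absNorm I = 2 := by
  rw [← h, map_pow] at hc
  have h8 : Ideal.absNorm I ^ 3 = 2 ^ 3 := by rw [hc]; norm_num
  exact Nat.pow_left_injective (by norm_num : 3 ≠ 0) h8

theorem eq_Q {O : Type*} [CommRing O] [IsDedekindDomain O] [Module.Free ℤ O] [Module.Finite ℤ O]
    {P : Ideal O} {c : O} (hP : Ideal.absNorm P = 2) (hQ : Ideal.absNorm (Ideal.span {2, c}) = 2)
    (hc : c ∈ P) : P = Ideal.span {2, c} := by
  symm
  apply eq_of_le_norm _ (by rw [hP, hQ]) (by rw [hP]; norm_num)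
  rw [Ideal.span_le]
  rintro x (rfl | rfl)
  · have := Ideal.absNorm_mem P
    rw [hP] at this
    exact_mod_cast this
  · exact hc

theorem class_card {a b : 𝓞 K} (h2 : (a : K) * b = 2) (h3 : (a : K) ^ 3 + (b : K) ^ 3 = 1)
    (hgen : IntermediateField.adjoin ℚ {(a : K)} = ⊤) : Nat.card (ClassGroup (𝓞 K)) = 3 := by
  have h2' : a * b = 2 := OK_two h2
  have h3' : a ^ 3 + b ^ 3 = 1 := OK_one h3
  obtain ⟨v1, v2, v3⟩ := vals2
  have c1 := cube_one h2' h3'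
  have c2 : Ideal.span {2, a - 1} ^ 3 = Ideal.span {a - 1} :=
    cube_one (a := b) (by rw [mul_comm]; exact h2') (by rw [add_comm]; exact h3')
  have n1 : Ideal.absNorm (Ideal.span {2, b - 1}) = 2 := by
    apply norm_two c1
    have := OK_norm h2 h3 hgen ![-1, 0, 0, 0, 1, 0]
    rw [v1] at this
    have e : elZ a b ![-1, 0, 0, 0, 1, 0] = b - 1 := by simp [elZ, el]; ring
    rw [e] at this; exact this
  have n2 : Ideal.absNorm (Ideal.span {2, a - 1}) = 2 := by
    apply norm_two c2
    have := OK_norm h2 h3 hgen ![-1, 0, 1, 0, 0, 0]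
    rw [v2] at this
    have e : elZ a b ![-1, 0, 1, 0, 0, 0] = a - 1 := by simp [elZ, el]; ring
    rw [e] at this; exact this
  have m1 : Ideal.span {2, b - 1} ∈ nonZeroDivisors (Ideal (𝓞 K)) :=
    Ideal.absNorm_ne_zero_iff_mem_nonZeroDivisors.mp (by rw [n1]; norm_num)
  have m2 : Ideal.span {2, a - 1} ∈ nonZeroDivisors (Ideal (𝓞 K)) :=
    Ideal.absNorm_ne_zero_iff_mem_nonZeroDivisors.mp (by rw [n2]; norm_num)
  have prod : Ideal.span {2, a - 1} * Ideal.span {2, b - 1} =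
      Ideal.span {elZ a b ![0, 0, -1, 1, -1, 1]} := by
    symm
    apply eq_of_le_norm
    · rw [Ideal.span_singleton_le_iff_mem]
      have e : elZ a b ![0, 0, -1, 1, -1, 1] = (a - 1) * 2 + (-a - b) * ((a - 1) * (b - 1))
          + 2 * (b - 1) := by
        simp [elZ, el]
        linear_combination (a + b - 2) * h2'
      have ma2 : (2 : 𝓞 K) ∈ Ideal.span {2, a - 1} := Ideal.subset_span (by simp)
      have mb2 : (2 : 𝓞 K) ∈ Ideal.span {2, b - 1} := Ideal.subset_span (by simp)
      have ma : a - 1 ∈ Ideal.span {2, a - 1} := Ideal.subset_span (by simp)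
      have mb : b - 1 ∈ Ideal.span {2, b - 1} := Ideal.subset_span (by simp)
      rw [e]
      exact add_mem (add_mem (Ideal.mul_mem_mul ma mb2)
        (Ideal.mul_mem_left _ _ (Ideal.mul_mem_mul ma mb))) (Ideal.mul_mem_mul ma2 mb)
    · rw [OK_norm h2 h3 hgen, v3, map_mul, n1, n2]; rfl
    · rw [map_mul, n1, n2]; norm_num
  set g : ClassGroup (𝓞 K) := ClassGroup.mk0 ⟨Ideal.span {2, b - 1}, m1⟩ with hg
  have hg3 : g ^ 3 = 1 := by
    rw [hg, ← map_pow]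
    refine (ClassGroup.mk0_eq_one_iff (pow_mem m1 3)).mpr ?_
    change (Ideal.span {2, b - 1} ^ 3).IsPrincipal
    rw [c1]
    exact ⟨⟨_, rfl⟩⟩
  have hg1 : g ≠ 1 := by
    intro h
    obtain ⟨⟨x, hx⟩⟩ := (ClassGroup.mk0_eq_one_iff m1).mp h
    obtain ⟨n, rfl⟩ := OK_rep h2 h3 hgen x
    have hx' : Ideal.span {2, b - 1} = Ideal.span {elZ a b n} := hx
    rw [hx', OK_norm h2 h3 hgen] at n1
    have h4 : 4 * nf n = (2 * nmM n + nmN n) ^ 2 + 31 * nmN n ^ 2 := by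
      unfold nf; ring
    have hp : nf n = 2 := by
      have : 0 ≤ 4 * nf n := by rw [h4]; positivity
      omega
    rw [hp] at h4
    have hN : nmN n = 0 := by
      by_contra h0
      have : 1 ≤ nmN n ^ 2 := by
        have : 0 < nmN n ^ 2 := by positivity
        omega
      nlinarith [sq_nonneg (2 * nmM n + nmN n)]
    rw [hN] at h4
    have : nmM n ^ 2 = 2 := by linarith
    have hu : nmM n ≤ 1 := by nlinarith
    have hl : -1 ≤ nmM n := by nlinarith
    interval_cases nmM n <;> omega
  have ho : orderOf g = 3 := orderOf_eq_prime hg3 hg1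
  have hbase : ∀ (P : Ideal (𝓞 K)) (hP : P ∈ nonZeroDivisors (Ideal (𝓞 K))),
      Ideal.absNorm P = 2 → ClassGroup.mk0 ⟨P, hP⟩ ∈ Subgroup.zpowers g := by
    intro P hP hN
    obtain ⟨φ, hφ⟩ := ringHom_of_norm P Nat.prime_two hN
    have hab : φ a ^ 3 + φ b ^ 3 = 1 := by
      rw [← map_pow, ← map_pow, ← map_add, h3', map_one]
    have key : ∀ s t : ZMod 2, s ^ 3 + t ^ 3 = 1 → t - 1 = 0 ∨ s - 1 = 0 := by decide
    rcases key _ _ hab with h | h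
    · have hm : b - 1 ∈ P := (hφ _).mp (by rw [map_sub, map_one]; exact h)
      have := eq_Q hN n1 hm
      subst this
      exact Subgroup.mem_zpowers g
    · have hm : a - 1 ∈ P := (hφ _).mp (by rw [map_sub, map_one]; exact h)
      have := eq_Q hN n2 hm
      subst this
      exact mk0_mem_of_mul _ hP m1 prod (Subgroup.mem_zpowers g)
  have htop : ∀ x, x ∈ Subgroup.zpowers g := by
    intro C
    obtain ⟨I, rfl, hI⟩ := minkowski h2 h3 hgen C
    exact all_mem h2 h3 hgen _ hbase _ hI I.1 I.2 rfl
  rw [← ho]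
  exact (orderOf_eq_card_of_forall_mem_zpowers htop).symm

end Fin

theorem card_aux {K : Type*} [Field K] [CharZero K] {A B : K} (h2 : A * B = 2)
    (h3 : A ^ 3 + B ^ 3 = 1) (hgen : IntermediateField.adjoin ℚ {A} = ⊤) :
    Nat.card (ClassGroup (integralClosure ℤ K)) = 3 := by
  have hfr := finrank_eq h2 h3 hgen
  have : FiniteDimensional ℚ K := Module.finite_of_finrank_pos (by rw [hfr]; norm_num)
  have : NumberField K := ⟨⟩
  obtain ⟨iA, iB⟩ := integral_AB h2 h3
  exact class_card (K := K) (a := ⟨A, iA⟩) (b := ⟨B, iB⟩) h2 h3 hgen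

theorem card_aux2 {K : Type*} [Field K] [inst : Algebra ℚ K] {A B : K} (h2 : A * B = 2)
    (h3 : A ^ 3 + B ^ 3 = 1) (hgen : IntermediateField.adjoin ℚ {A} = ⊤) :
    Nat.card (ClassGroup (integralClosure ℤ K)) = 3 := by
  have : CharZero K := algebraRat.charZero K
  have e : inst = DivisionRing.toRatAlgebra := Subsingleton.elim _ _
  subst e
  exact card_aux h2 h3 hgen

end S11

/-- Let `K = ℚ[X]/(X⁶ − X³ + 8)` (that is, `K = ℚ(α)` where `α` is a root of
`X⁶ − X³ + 8`). Then `K` is a number field of degree 6, the subring `ℤ[α, 2·α⁻¹]`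
equals the ring of integers of `K`, and the class group of `K` has exactly 3 elements. -/
theorem statement_11 (K : Type*) [Field K] [Algebra ℚ K] (α : K)
    (hα : α ^ 6 - α ^ 3 + 8 = 0)
    (hgen : IntermediateField.adjoin ℚ {α} = ⊤) :
    Module.finrank ℚ K = 6 ∧
    Algebra.adjoin ℤ ({α, 2 * α⁻¹} : Set K) = integralClosure ℤ K ∧
    Nat.card (ClassGroup (integralClosure ℤ K)) = 3 := by
  have : CharZero K := algebraRat.charZero K
  have h0 : α ≠ 0 := by
    rintro rfl
    norm_num at hα
  have h2 : α * (2 * α⁻¹) = 2 := by field_simp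
  have h3 : α ^ 3 + (2 * α⁻¹) ^ 3 = 1 := by
    field_simp
    linear_combination hα
  exact ⟨S11.finrank_eq h2 h3 hgen, S11.adjoin_eq h2 h3 hgen, S11.card_aux2 h2 h3 hgen⟩
end

section
/- Let K = ℚ[X]/(X² − 205X + 10609) and let α be the class of X in K. Then K is an imaginary quadratic field (isomorphic to ℚ(√−411)), the subring ℤ[α] equals the ring of integers of K, and the class group of K is cyclic of order 6. -/
namespace Quad411

open Ideal
open scoped nonZeroDivisors

/-- The class of a nonzero ideal (and `1` for the zero ideal). -/
noncomputable def cl {R : Type*} [CommRing R] [IsDedekindDomain R] (I : Ideal R) :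
    ClassGroup R :=
  open Classical in
  if h : I = 0 then 1 else ClassGroup.mk0 ⟨I, mem_nonZeroDivisors_of_ne_zero h⟩

theorem cl_of_ne {R : Type*} [CommRing R] [IsDedekindDomain R] {I : Ideal R}
    (h : I ≠ 0) : cl I = ClassGroup.mk0 ⟨I, mem_nonZeroDivisors_of_ne_zero h⟩ := by
  unfold cl
  exact dif_neg h

theorem cl_mul {R : Type*} [CommRing R] [IsDedekindDomain R] {I J : Ideal R}
    (hI : I ≠ 0) (hJ : J ≠ 0) : cl (I * J) = cl I * cl J := by
  rw [cl_of_ne hI, cl_of_ne hJ, cl_of_ne (mul_ne_zero hI hJ), ← map_mul]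
  rfl

theorem cl_eq_one {R : Type*} [CommRing R] [IsDedekindDomain R] {I : Ideal R}
    (h : I ≠ 0) : cl I = 1 ↔ ∃ z, I = span {z} := by
  rw [cl_of_ne h, ClassGroup.mk0_eq_one_iff]
  constructor
  · rintro ⟨z, hz⟩; exact ⟨z, hz⟩
  · rintro ⟨z, hz⟩; exact ⟨z, hz⟩

theorem cl_span {R : Type*} [CommRing R] [IsDedekindDomain R] (z : R) :
    cl (span {z}) = 1 := by
  by_cases h : span {z} = 0
  · unfold cl
    exact dif_pos h
  · exact (cl_eq_one h).2 ⟨z, rfl⟩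

section
variable {R : Type*} [CommRing R] (w : R)

theorem eq_span_pair (P : Ideal R) (hP : P ≠ ⊤)
    (hrep : ∀ z : R, ∃ x y : ℤ, z = x + y * w) (p : ℤ) (hp : Prime p) (r : ℤ)
    (h1 : (p : R) ∈ P) (h2 : w + (r : R) ∈ P) : P = span {(p : R), w + (r : R)} := by
  apply le_antisymm
  · intro z hz
    obtain ⟨x, y, rfl⟩ := hrep z
    have h3 : ((x - y * r : ℤ) : R) ∈ P := by
      have := P.sub_mem hz (P.mul_mem_left (y : R) h2)
      convert this using 1
      push_cast; ring
    by_cases hd : p ∣ x - y * r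
    · obtain ⟨k, hk⟩ := hd
      rw [mem_span_pair]
      refine ⟨k, y, ?_⟩
      have : (x : R) - y * r = p * k := by exact_mod_cast congrArg (Int.cast : ℤ → R) hk
      linear_combination -this
    · exfalso
      apply hP
      rw [eq_top_iff_one]
      obtain ⟨a, b, hab⟩ := (hp.irreducible.coprime_iff_not_dvd).2 hd
      have h4 : (a : R) * p + b * ((x - y * r : ℤ) : R) = 1 := by exact_mod_cast congrArg (Int.cast : ℤ → R) hab
      rw [← h4]
      exact P.add_mem (P.mul_mem_left _ h1) (P.mul_mem_left _ h3)
  · rw [span_le]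
    rintro z (rfl | rfl)
    · exact h1
    · exact h2

theorem eq_span_inert (P : Ideal R) (hP : P ≠ ⊤) (hw : w ^ 2 = w - 103)
    (hrep : ∀ z : R, ∃ x y : ℤ, z = x + y * w) (p : ℤ) (hp : Prime p)
    (hin : ∀ x y : ℤ, p ∣ x ^ 2 + x * y + 103 * y ^ 2 → p ∣ x ∧ p ∣ y)
    (h1 : (p : R) ∈ P) : P = span {(p : R)} := by
  apply le_antisymm
  · intro z hz
    obtain ⟨x, y, rfl⟩ := hrep z
    by_cases hd : p ∣ x ^ 2 + x * y + 103 * y ^ 2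
    · obtain ⟨⟨a, rfl⟩, ⟨b, rfl⟩⟩ := hin x y hd
      rw [mem_span_singleton]
      exact ⟨a + b * w, by push_cast; ring⟩
    · exfalso
      apply hP
      rw [eq_top_iff_one]
      have h3 : ((x ^ 2 + x * y + 103 * y ^ 2 : ℤ) : R) ∈ P := by
        convert P.mul_mem_left (x + y - y * w : R) hz using 1
        push_cast
        linear_combination (y : R) ^ 2 * hw
      obtain ⟨a, b, hab⟩ := (hp.irreducible.coprime_iff_not_dvd).2 hd
      have h4 : (a : R) * p + b * ((x ^ 2 + x * y + 103 * y ^ 2 : ℤ) : R) = 1 := by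
        exact_mod_cast congrArg (Int.cast : ℤ → R) hab
      rw [← h4]
      exact P.add_mem (P.mul_mem_left _ h1) (P.mul_mem_left _ h3)
  · rw [span_le]
    rintro z rfl
    exact h1

theorem inert_two (x y : ℤ) (h : (2 : ℤ) ∣ x ^ 2 + x * y + 103 * y ^ 2) : (2 : ℤ) ∣ x ∧ (2 : ℤ) ∣ y := by
  have key : ∀ a b : ZMod 2, a ^ 2 + a * b + 103 * b ^ 2 = 0 → a = 0 ∧ b = 0 := by decide
  have := key x y (by exact_mod_cast (ZMod.intCast_zmod_eq_zero_iff_dvd _ 2).2 h)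
  exact ⟨(ZMod.intCast_zmod_eq_zero_iff_dvd _ 2).1 this.1,
    (ZMod.intCast_zmod_eq_zero_iff_dvd _ 2).1 this.2⟩

theorem inert_eleven (x y : ℤ) (h : (11 : ℤ) ∣ x ^ 2 + x * y + 103 * y ^ 2) :
    (11 : ℤ) ∣ x ∧ (11 : ℤ) ∣ y := by
  have key : ∀ a b : ZMod 11, a ^ 2 + a * b + 103 * b ^ 2 = 0 → a = 0 ∧ b = 0 := by decide
  have := key x y (by exact_mod_cast (ZMod.intCast_zmod_eq_zero_iff_dvd _ 11).2 h)
  exact ⟨(ZMod.intCast_zmod_eq_zero_iff_dvd _ 11).1 this.1,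
    (ZMod.intCast_zmod_eq_zero_iff_dvd _ 11).1 this.2⟩

/-- prime ideals containing a small rational prime -/
theorem prime_cases (P : Ideal R) [hP : P.IsPrime] (hw : w ^ 2 = w - 103)
    (hrep : ∀ z : R, ∃ x y : ℤ, z = x + y * w) (n : ℕ) (hn0 : n ≠ 0) (hn : n ≤ 12)
    (hnP : (n : R) ∈ P) :
    P = span {2} ∨ P = span {11} ∨ ∃ p : ℤ, (p = 3 ∨ p = 5 ∨ p = 7) ∧
      (P = span {(p : R), w + 1} ∨ P = span {(p : R), w - 2}) := by
  have hT := hP.ne_top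
  have h1 : (1 : R) ∉ P := fun h => hT ((eq_top_iff_one P).2 h)
  have small : (2 : R) ∈ P ∨ (3 : R) ∈ P ∨ (5 : R) ∈ P ∨ (7 : R) ∈ P ∨ (11 : R) ∈ P := by
    have hm : ∀ a b : ℕ, ((a * b : ℕ) : R) ∈ P → (a : R) ∈ P ∨ (b : R) ∈ P := by
      intro a b h
      rw [Nat.cast_mul] at h
      exact hP.mem_or_mem h
    interval_cases n
    · exact absurd rfl hn0
    · exact absurd (by simpa using hnP) h1
    · exact Or.inl (by simpa using hnP)
    · exact Or.inr (Or.inl (by simpa using hnP))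
    · rcases hm 2 2 hnP with h | h <;> exact Or.inl (by simpa using h)
    · exact Or.inr (Or.inr (Or.inl (by simpa using hnP)))
    · rcases hm 2 3 hnP with h | h
      · exact Or.inl (by simpa using h)
      · exact Or.inr (Or.inl (by simpa using h))
    · exact Or.inr (Or.inr (Or.inr (Or.inl (by simpa using hnP))))
    · rcases hm 2 4 hnP with h | h
      · exact Or.inl (by simpa using h)
      · rcases hm 2 2 h with h | h <;> exact Or.inl (by simpa using h)
    · rcases hm 3 3 hnP with h | h <;> exact Or.inr (Or.inl (by simpa using h))
    · rcases hm 2 5 hnP with h | h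
      · exact Or.inl (by simpa using h)
      · exact Or.inr (Or.inr (Or.inl (by simpa using h)))
    · exact Or.inr (Or.inr (Or.inr (Or.inr (by simpa using hnP))))
    · rcases hm 3 4 hnP with h | h
      · exact Or.inr (Or.inl (by simpa using h))
      · rcases hm 2 2 h with h | h <;> exact Or.inl (by simpa using h)
  have split : ∀ p : ℤ, Prime p → p ∣ 105 → (p : R) ∈ P →
      (P = span {(p : R), w + 1} ∨ P = span {(p : R), w - 2}) := by
    intro p hp ⟨k, hk⟩ hpP
    have hk' : (105 : R) = p * k := by exact_mod_cast congrArg (Int.cast : ℤ → R) hk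
    have : (w + 1) * (w - 2) ∈ P := by
      have h := P.mul_mem_left (-k : R) hpP
      convert h using 1
      linear_combination hw - hk'
    rcases hP.mem_or_mem this with h | h
    · left
      have := eq_span_pair w P hT hrep p hp 1 hpP (by simpa using h)
      simpa using this
    · right
      have := eq_span_pair w P hT hrep p hp (-2) hpP (by simpa [sub_eq_add_neg] using h)
      simpa [sub_eq_add_neg] using this
  rcases small with h | h | h | h | h
  · left
    simpa using eq_span_inert w P hT hw hrep 2 Int.prime_two inert_two (by simpa using h)
  · exact Or.inr (Or.inr ⟨3, by simp, split 3 (by norm_num [Int.prime_iff_natAbs_prime]) (by norm_num) (by simpa using h)⟩)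
  · exact Or.inr (Or.inr ⟨5, by simp, split 5 (by norm_num [Int.prime_iff_natAbs_prime]) (by norm_num) (by simpa using h)⟩)
  · exact Or.inr (Or.inr ⟨7, by simp, split 7 (by norm_num [Int.prime_iff_natAbs_prime]) (by norm_num) (by simpa using h)⟩)
  · right; left
    simpa using eq_span_inert w P hT hw hrep 11 (by norm_num [Int.prime_iff_natAbs_prime]) inert_eleven (by simpa using h)

theorem mul_eq_span_of (I J : Ideal R) (z : R) (h1 : I * J ≤ span {z}) (h2 : z ∈ I * J) :
    I * J = span {z} :=
  le_antisymm h1 ((span_singleton_le_iff_mem _).2 h2)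

/-- `(p, w+1)(p, w-2) = (p)` for `p ∣ 105`, `p` odd enough. -/
theorem conj_mul (hw : w ^ 2 = w - 103) (p k a b : ℤ) (hk : 105 = p * k) (hab : a * p + b * 3 = 1 ∨ a * p + b * k = 1) :
    span {(p : R), w + 1} * span {(p : R), w - 2} = span {(p : R)} := by
  have hk' : (105 : R) = p * k := by exact_mod_cast congrArg (Int.cast : ℤ → R) hk
  rw [span_pair_mul_span_pair]
  apply le_antisymm
  · rw [span_le]
    rintro z (rfl | rfl | rfl | rfl) <;> simp only [SetLike.mem_coe, mem_span_singleton]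
    · exact ⟨p, rfl⟩
    · exact ⟨w - 2, rfl⟩
    · exact ⟨w + 1, by ring⟩
    · exact ⟨-k, by linear_combination hw - hk'⟩
  · rw [span_singleton_le_iff_mem]
    set S := span {(p : R) * p, p * (w - 2), (w + 1) * p, (w + 1) * (w - 2)}
    have m1 : (p : R) * p ∈ S := subset_span (by simp)
    have m2 : (p : R) * (w - 2) ∈ S := subset_span (by simp)
    have m3 : (w + 1) * (p : R) ∈ S := subset_span (by simp)
    have m4 : (w + 1) * (w - 2) ∈ S := subset_span (by simp)
    rcases hab with hab | hab
    · have hab' : (a : R) * p + b * 3 = 1 := by exact_mod_cast congrArg (Int.cast : ℤ → R) hab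
      have := S.add_mem (S.mul_mem_left a m1) (S.mul_mem_left b (S.sub_mem m3 m2))
      convert this using 1
      linear_combination -(p : R) * hab'
    · have hab' : (a : R) * p + b * k = 1 := by exact_mod_cast congrArg (Int.cast : ℤ → R) hab
      have := S.sub_mem (S.mul_mem_left a m1) (S.mul_mem_left b m4)
      convert this using 1
      linear_combination -(p : R) * hab' + b * hw - b * hk'

theorem p5_sq (hw : w ^ 2 = w - 103) :
    span {(5 : R), w + 1} * span {(5 : R), w + 1} = span {(25 : R), w + 16} := by
  rw [span_pair_mul_span_pair]
  apply le_antisymm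
  · rw [span_le]
    rintro z (rfl | rfl | rfl | rfl) <;> simp only [SetLike.mem_coe, mem_span_pair]
    · exact ⟨1, 0, by ring⟩
    · exact ⟨-3, 5, by ring⟩
    · exact ⟨-3, 5, by ring⟩
    · exact ⟨-6, 3, by linear_combination -hw⟩
  · rw [span_le]
    set S := span {(5 : R) * 5, 5 * (w + 1), (w + 1) * 5, (w + 1) * (w + 1)}
    have m1 : (5 : R) * 5 ∈ S := subset_span (by simp)
    have m2 : (5 : R) * (w + 1) ∈ S := subset_span (by simp)
    have m4 : (w + 1) * (w + 1) ∈ S := subset_span (by simp)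
    rintro z (rfl | rfl)
    · convert m1 using 1; norm_num
    · -- (w+1)^2 = 3 w - 102 ; 2*(3w-102) - 5(w+1) = w - 209 = w + 16 - 225
      have := S.add_mem (S.sub_mem (S.mul_mem_left 2 m4) m2) (S.mul_mem_left 9 m1)
      rw [SetLike.mem_coe]
      convert this using 1
      linear_combination -2 * hw

theorem p5_cube (hw : w ^ 2 = w - 103) :
    span {(25 : R), w + 16} * span {(5 : R), w + 1} = span {(125 : R), w + 16} := by
  rw [span_pair_mul_span_pair]
  apply le_antisymm
  · rw [span_le]
    rintro z (rfl | rfl | rfl | rfl) <;> simp only [SetLike.mem_coe, mem_span_pair]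
    · exact ⟨1, 0, by ring⟩
    · exact ⟨-3, 25, by ring⟩
    · exact ⟨0, 5, by ring⟩
    · exact ⟨0, w + 1, by ring⟩
  · rw [span_le]
    set S := span {(25 : R) * 5, 25 * (w + 1), (w + 16) * 5, (w + 16) * (w + 1)}
    have m1 : (25 : R) * 5 ∈ S := subset_span (by simp)
    have m3 : (w + 16) * (5 : R) ∈ S := subset_span (by simp)
    have m4 : (w + 16) * (w + 1) ∈ S := subset_span (by simp)
    rintro z (rfl | rfl)
    · convert m1 using 1; norm_num
    · -- (w+16)(w+1) = 18 w - 87 = 18 (w+16) - 375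
      have := S.sub_mem (S.sub_mem (S.mul_mem_left 2 m4) (S.mul_mem_left 7 m3)) (S.mul_mem_left (-6) m1)
      rw [SetLike.mem_coe]
      convert this using 1
      linear_combination -2 * hw

theorem p5c_p3 (hw : w ^ 2 = w - 103) :
    span {(125 : R), w + 16} * span {(3 : R), w + 1} = span {w + 16} := by
  rw [span_pair_mul_span_pair]
  apply le_antisymm
  · rw [span_le]
    rintro z (rfl | rfl | rfl | rfl) <;> simp only [SetLike.mem_coe, mem_span_singleton]
    -- (w+16)(17-w) = 375
    · exact ⟨17 - w, by linear_combination hw⟩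
    · exact ⟨125 - 5 * (17 - w), by linear_combination -5 * hw⟩
    · exact ⟨3, by ring⟩
    · exact ⟨w + 1, by ring⟩
  · rw [span_singleton_le_iff_mem]
    set S := span {(125 : R) * 3, 125 * (w + 1), (w + 16) * 3, (w + 16) * (w + 1)}
    have m1 : (125 : R) * 3 ∈ S := subset_span (by simp)
    have m2 : (125 : R) * (w + 1) ∈ S := subset_span (by simp)
    have m3 : (w + 16) * (3 : R) ∈ S := subset_span (by simp)
    -- 125 (w+1) = 125 (w+16) - 5*375
    have := S.sub_mem (S.mul_mem_left 42 m3) (S.add_mem m2 (S.mul_mem_left 5 m1))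
    convert this using 1
    ring

theorem p3_p5 :
    span {(3 : R), w + 1} * span {(5 : R), w + 1} = span {(15 : R), w + 1} := by
  rw [span_pair_mul_span_pair]
  apply le_antisymm
  · rw [span_le]
    rintro z (rfl | rfl | rfl | rfl) <;> simp only [SetLike.mem_coe, mem_span_pair]
    · exact ⟨1, 0, by ring⟩
    · exact ⟨0, 3, by ring⟩
    · exact ⟨0, 5, by ring⟩
    · exact ⟨0, w + 1, by ring⟩
  · rw [span_le]
    set S := span {(3 : R) * 5, 3 * (w + 1), (w + 1) * 5, (w + 1) * (w + 1)}
    have m1 : (3 : R) * 5 ∈ S := subset_span (by simp)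
    have m2 : (3 : R) * (w + 1) ∈ S := subset_span (by simp)
    have m3 : (w + 1) * (5 : R) ∈ S := subset_span (by simp)
    rintro z (rfl | rfl)
    · convert m1 using 1; norm_num
    · rw [SetLike.mem_coe]
      convert S.sub_mem (S.mul_mem_left 2 m2) m3 using 1; ring

theorem p15_p7 (hw : w ^ 2 = w - 103) :
    span {(15 : R), w + 1} * span {(7 : R), w + 1} = span {w + 1} := by
  rw [span_pair_mul_span_pair]
  apply le_antisymm
  · rw [span_le]
    rintro z (rfl | rfl | rfl | rfl) <;> simp only [SetLike.mem_coe, mem_span_singleton]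
    · exact ⟨2 - w, by linear_combination hw⟩
    · exact ⟨15, by ring⟩
    · exact ⟨7, by ring⟩
    · exact ⟨w + 1, by ring⟩
  · rw [span_singleton_le_iff_mem]
    set S := span {(15 : R) * 7, 15 * (w + 1), (w + 1) * 7, (w + 1) * (w + 1)}
    have m2 : (15 : R) * (w + 1) ∈ S := subset_span (by simp)
    have m3 : (w + 1) * (7 : R) ∈ S := subset_span (by simp)
    convert S.sub_mem m2 (S.mul_mem_left 2 m3) using 1; ring

theorem p5_ne_top (hw : w ^ 2 = w - 103)
    (hrep : ∀ z : R, ∃ x y : ℤ, z = x + y * w)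
    (hind : ∀ x y : ℤ, (x : R) + y * w = 0 → x = 0 ∧ y = 0) :
    (1 : R) ∉ span {(5 : R), w + 1} := by
  rw [mem_span_pair]
  rintro ⟨a, b, h⟩
  obtain ⟨x, y, rfl⟩ := hrep a
  obtain ⟨u, v, rfl⟩ := hrep b
  -- 5x + u - 103 v - 1 = 0, 5 y + u + 2 v = 0
  have := hind (5 * x + u - 103 * v - 1) (5 * y + u + 2 * v) (by
    push_cast
    linear_combination h - v * hw)
  omega

theorem not_principal (hw : w ^ 2 = w - 103)
    (hrep : ∀ z : R, ∃ x y : ℤ, z = x + y * w)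
    (hind : ∀ x y : ℤ, (x : R) + y * w = 0 → x = 0 ∧ y = 0) (z : R)
    (h1 : w + 16 ∈ span {z}) (h2 : (125 : R) ∈ span {z})
    (h3 : span {z} ≤ span {(5 : R), w + 1}) : False := by
  rw [mem_span_singleton] at h1 h2
  obtain ⟨a, ha⟩ := h1
  obtain ⟨b, hb⟩ := h2
  obtain ⟨s, t, rfl⟩ := hrep z
  obtain ⟨x, y, rfl⟩ := hrep a
  obtain ⟨u, v, rfl⟩ := hrep b
  have e1 := hind (s * x - 103 * t * y - 16) (s * y + t * x + t * y - 1) (by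
    push_cast
    linear_combination -ha - t * y * hw)
  have e2 := hind (s * u - 103 * t * v - 125) (s * v + t * u + t * v) (by
    push_cast
    linear_combination -hb - t * v * hw)
  obtain ⟨e11, e12⟩ := e1
  obtain ⟨e21, e22⟩ := e2
  have n1 : (s ^ 2 + s * t + 103 * t ^ 2) * (x ^ 2 + x * y + 103 * y ^ 2) = 375 := by
    have : s * x = 103 * t * y + 16 := by linarith
    have h' : s * y + t * x + t * y = 1 := by linarith
    have : (s * x - 103 * t * y) = 16 := by linarith
    calc _ = (s * x - 103 * t * y) ^ 2 + (s * x - 103 * t * y) * (s * y + t * x + t * y)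
        + 103 * (s * y + t * x + t * y) ^ 2 := by ring
      _ = 375 := by rw [this, h']; norm_num
  have n2 : (s ^ 2 + s * t + 103 * t ^ 2) * (u ^ 2 + u * v + 103 * v ^ 2) = 15625 := by
    have : (s * u - 103 * t * v) = 125 := by linarith
    calc _ = (s * u - 103 * t * v) ^ 2 + (s * u - 103 * t * v) * (s * v + t * u + t * v)
        + 103 * (s * v + t * u + t * v) ^ 2 := by ring
      _ = 15625 := by rw [this, e22]; norm_num
  have hd : (s ^ 2 + s * t + 103 * t ^ 2) ∣ 125 := by
    have d1 : (s ^ 2 + s * t + 103 * t ^ 2) ∣ 375 := ⟨_, n1.symm⟩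
    have d2 : (s ^ 2 + s * t + 103 * t ^ 2) ∣ 15625 := ⟨_, n2.symm⟩
    have := dvd_sub (d1.mul_left 42) d2
    norm_num at this
    exact this
  have hle := Int.le_of_dvd (by norm_num) hd
  have ht1 : t ≤ 1 := by nlinarith [sq_nonneg (2 * s + t)]
  have ht2 : -1 ≤ t := by nlinarith [sq_nonneg (2 * s + t)]
  have hs1 : s ≤ 12 := by nlinarith [sq_nonneg (s + 2 * t)]
  have hs2 : -12 ≤ s := by nlinarith [sq_nonneg (s + 2 * t)]
  have key : t = 0 ∧ (s = 1 ∨ s = -1 ∨ s = 5 ∨ s = -5) := by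
    clear ha hb n1 n2 e11 e12 e21 e22 h3 hle
    revert hd
    interval_cases t <;> interval_cases s <;> norm_num
  obtain ⟨rfl, hs⟩ := key
  rcases hs with rfl | rfl | rfl | rfl
  · exact p5_ne_top w hw hrep hind (h3 (by simp))
  · exact p5_ne_top w hw hrep hind (h3 (by simp))
  · omega
  · omega

end

section
variable {R : Type*} [CommRing R] [IsDedekindDomain R] [Module.Free ℤ R] (w : R)

theorem classGroup_aux (hw : w ^ 2 = w - 103)
    (hrep : ∀ z : R, ∃ x y : ℤ, z = x + y * w)
    (hind : ∀ x y : ℤ, (x : R) + y * w = 0 → x = 0 ∧ y = 0)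
    (hM : ∀ C : ClassGroup R, ∃ I : (Ideal R)⁰, ClassGroup.mk0 I = C ∧
      absNorm (I : Ideal R) ≠ 0 ∧ absNorm (I : Ideal R) ≤ 12) :
    IsCyclic (ClassGroup R) ∧ Nat.card (ClassGroup R) = 6 := by
  have hne : ∀ (n : ℤ) (z : R), n ≠ 0 → span {(n : R), z} ≠ 0 := by
    intro n z hn h
    have h0 : (n : R) ∈ span {(n : R), z} := subset_span (by simp)
    rw [h] at h0
    have h0' : (n : R) = 0 := by simpa using h0
    exact hn (hind n 0 (by simpa using h0')).1
  have h5 : span {(5 : R), w + 1} ≠ 0 := by exact_mod_cast hne 5 (w + 1) (by norm_num)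
  have h5' : span {(5 : R), w - 2} ≠ 0 := by exact_mod_cast hne 5 (w - 2) (by norm_num)
  have h3 : span {(3 : R), w + 1} ≠ 0 := by exact_mod_cast hne 3 (w + 1) (by norm_num)
  have h3' : span {(3 : R), w - 2} ≠ 0 := by exact_mod_cast hne 3 (w - 2) (by norm_num)
  have h7 : span {(7 : R), w + 1} ≠ 0 := by exact_mod_cast hne 7 (w + 1) (by norm_num)
  have h7' : span {(7 : R), w - 2} ≠ 0 := by exact_mod_cast hne 7 (w - 2) (by norm_num)
  have h15 : span {(15 : R), w + 1} ≠ 0 := by exact_mod_cast hne 15 (w + 1) (by norm_num)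
  have h25 : span {(25 : R), w + 16} ≠ 0 := by exact_mod_cast hne 25 (w + 16) (by norm_num)
  have h125 : span {(125 : R), w + 16} ≠ 0 := by exact_mod_cast hne 125 (w + 16) (by norm_num)
  set g := cl (span {(5 : R), w + 1}) with hg
  have c5 : g * cl (span {(5 : R), w - 2}) = 1 := by
    rw [hg, ← cl_mul h5 h5']
    have := conj_mul w hw 5 21 (-4) 1 (by norm_num) (by norm_num)
    push_cast at this
    rw [this, cl_span]
  have c7 : cl (span {(7 : R), w + 1}) * cl (span {(7 : R), w - 2}) = 1 := by
    rw [← cl_mul h7 h7']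
    have := conj_mul w hw 7 15 (-2) 1 (by norm_num) (by norm_num)
    push_cast at this
    rw [this, cl_span]
  have c3 : cl (span {(3 : R), w + 1}) * cl (span {(3 : R), w - 2}) = 1 := by
    rw [← cl_mul h3 h3']
    have := conj_mul w hw 3 35 12 (-1) (by norm_num) (by norm_num)
    push_cast at this
    rw [this, cl_span]
  have e3 : span {(3 : R), w - 2} = span {(3 : R), w + 1} := by
    apply le_antisymm <;> rw [span_le] <;> rintro z (rfl | rfl) <;>
      simp only [SetLike.mem_coe, mem_span_pair]
    · exact ⟨1, 0, by ring⟩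
    · exact ⟨-1, 1, by ring⟩
    · exact ⟨1, 0, by ring⟩
    · exact ⟨1, 1, by ring⟩
  rw [e3] at c3
  have g2 : cl (span {(25 : R), w + 16}) = g ^ 2 := by
    rw [← p5_sq w hw, cl_mul h5 h5, pow_two]
  have g3 : cl (span {(125 : R), w + 16}) = g ^ 3 := by
    rw [← p5_cube w hw, cl_mul h25 h5, g2, ← pow_succ]
  have g33 : g ^ 3 * cl (span {(3 : R), w + 1}) = 1 := by
    rw [← g3, ← cl_mul h125 h3, p5c_p3 w hw, cl_span]
  have g357 : cl (span {(3 : R), w + 1}) * g * cl (span {(7 : R), w + 1}) = 1 := by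
    rw [hg, ← cl_mul h3 h5, p3_p5 w, ← cl_mul h15 h7, p15_p7 w hw, cl_span]
  have h25P : span {(25 : R), w + 16} ≤ span {(5 : R), w + 1} := by
    rw [← p5_sq w hw]; exact Ideal.mul_le_right (I := span {(5 : R), w + 1}) (J := span {(5 : R), w + 1})
  have h125P : span {(125 : R), w + 16} ≤ span {(5 : R), w + 1} := by
    rw [← p5_cube w hw]; exact Ideal.mul_le_right (I := span {(25 : R), w + 16}) (J := span {(5 : R), w + 1})
  have n2 : g ^ 2 ≠ 1 := by
    rw [← g2, Ne, cl_eq_one h25]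
    rintro ⟨z, hz⟩
    refine not_principal w hw hrep hind z ?_ ?_ (hz ▸ h25P)
    · rw [← hz]; exact subset_span (by simp)
    · rw [← hz, mem_span_pair]; exact ⟨5, 0, by norm_num⟩
  have n3 : g ^ 3 ≠ 1 := by
    rw [← g3, Ne, cl_eq_one h125]
    rintro ⟨z, hz⟩
    refine not_principal w hw hrep hind z ?_ ?_ (hz ▸ h125P)
    · rw [← hz]; exact subset_span (by simp)
    · rw [← hz]; exact subset_span (by simp)
  have i3 : cl (span {(3 : R), w + 1}) = (g ^ 3)⁻¹ := eq_inv_of_mul_eq_one_right g33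
  have g6 : g ^ 6 = 1 := by
    rw [i3, ← mul_inv, inv_eq_one, ← pow_add] at c3
    exact c3
  have ho : orderOf g = 6 := by
    have hd : orderOf g ∣ 6 := orderOf_dvd_of_pow_eq_one g6
    have hm : orderOf g ∈ Nat.divisors 6 := by simp [hd]
    rw [show Nat.divisors 6 = {1, 2, 3, 6} by decide] at hm
    have hp := pow_orderOf_eq_one g
    simp only [Finset.mem_insert, Finset.mem_singleton] at hm
    rcases hm with h | h | h | h
    · exfalso
      rw [h, pow_one] at hp
      exact n2 (by rw [hp, one_pow])
    · rw [h] at hp; exact absurd hp n2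
    · rw [h] at hp; exact absurd hp n3
    · exact h
  have z3 : cl (span {(3 : R), w + 1}) ∈ Subgroup.zpowers g := by
    rw [i3]; exact inv_mem (Subgroup.npow_mem_zpowers g 3)
  have zg : g ∈ Subgroup.zpowers g := Subgroup.mem_zpowers g
  have z5' : cl (span {(5 : R), w - 2}) ∈ Subgroup.zpowers g := by
    rw [eq_inv_of_mul_eq_one_right c5]; exact inv_mem zg
  have z7 : cl (span {(7 : R), w + 1}) ∈ Subgroup.zpowers g := by
    rw [eq_inv_of_mul_eq_one_right g357]; exact inv_mem (mul_mem z3 zg)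
  have z7' : cl (span {(7 : R), w - 2}) ∈ Subgroup.zpowers g := by
    rw [eq_inv_of_mul_eq_one_right c7]; exact inv_mem z7
  have hprime : ∀ P : Ideal R, P.IsPrime → absNorm P ≠ 0 → absNorm P ≤ 12 →
      cl P ∈ Subgroup.zpowers g := by
    intro P hP h0 h12
    rcases prime_cases w P hw hrep _ h0 h12 (absNorm_mem P) with h | h | ⟨p, rfl | rfl | rfl, h | h⟩
    · rw [h, cl_span]; exact one_mem _
    · rw [h, cl_span]; exact one_mem _
    · push_cast at h; rw [h]; exact z3
    · push_cast at h; rw [h, e3]; exact z3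
    · push_cast at h; rw [h]; exact zg
    · push_cast at h; rw [h]; exact z5'
    · push_cast at h; rw [h]; exact z7
    · push_cast at h; rw [h]; exact z7'
  have hall : ∀ I : Ideal R, absNorm I ≠ 0 → absNorm I ≤ 12 → cl I ∈ Subgroup.zpowers g := by
    intro I
    induction I using UniqueFactorizationMonoid.induction_on_prime with
    | h₁ => intro h; simp at h
    | h₂ u hu =>
      intro _ _
      rw [Ideal.isUnit_iff.1 hu, ← span_singleton_one, cl_span]
      exact one_mem _
    | h₃ a p ha hp ih =>
      intro h0 h12
      rw [map_mul] at h0 h12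
      have ha0 : absNorm a ≠ 0 := right_ne_zero_of_mul h0
      have hp0 : absNorm p ≠ 0 := left_ne_zero_of_mul h0
      rw [cl_mul hp.ne_zero ha]
      refine mul_mem (hprime p (isPrime_of_prime hp) hp0 ?_) (ih ha0 ?_)
      · exact le_trans (Nat.le_mul_of_pos_right _ (Nat.pos_of_ne_zero ha0)) h12
      · exact le_trans (Nat.le_mul_of_pos_left _ (Nat.pos_of_ne_zero hp0)) h12
  have hgen : ∀ C : ClassGroup R, C ∈ Subgroup.zpowers g := by
    intro C
    obtain ⟨I, rfl, h0, h12⟩ := hM C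
    have := hall I h0 h12
    rwa [cl_of_ne (nonZeroDivisors.coe_ne_zero I)] at this
  refine ⟨⟨g, hgen⟩, ?_⟩
  rw [← ho, orderOf_eq_card_of_forall_mem_zpowers hgen]

end
section
variable {R S : Type*} [CommRing R] [CommRing S] [Algebra R S] (w : S)

theorem exists_basis (hrep : ∀ z : S, ∃ x y : R, z = algebraMap R S x + algebraMap R S y * w)
    (hind : ∀ x y : R, algebraMap R S x + algebraMap R S y * w = 0 → x = 0 ∧ y = 0) :
    ∃ b : Module.Basis (Fin 2) R S, b 0 = 1 ∧ b 1 = w := by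
  have li : LinearIndependent R ![(1 : S), w] := by
    rw [LinearIndependent.pair_iff]
    intro s t h
    exact hind s t (by simpa [Algebra.smul_def] using h)
  have sp : ⊤ ≤ Submodule.span R (Set.range ![(1 : S), w]) := by
    intro z _
    obtain ⟨x, y, rfl⟩ := hrep z
    rw [Matrix.range_cons, Matrix.range_cons, Matrix.range_empty, Set.union_empty,
      Set.singleton_union, Submodule.mem_span_pair]
    exact ⟨x, y, by simp [Algebra.smul_def]⟩
  exact ⟨Module.Basis.mk li sp, by simp, by simp⟩

theorem leftMul (hw : w ^ 2 = w - 103) (b : Module.Basis (Fin 2) R S) (b0 : b 0 = 1) (b1 : b 1 = w)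
    (x y : R) : Algebra.leftMulMatrix b (algebraMap R S x + algebraMap R S y * w)
      = !![x, -103 * y; y, x + y] := by
  have hr : ∀ u v : R, ∀ i, b.repr (algebraMap R S u + algebraMap R S v * w) i = ![u, v] i := by
    intro u v i
    have : algebraMap R S u + algebraMap R S v * w = u • b 0 + v • b 1 := by
      rw [b0, b1, Algebra.smul_def, Algebra.smul_def, mul_one]
    rw [this]
    fin_cases i <;> simp
  ext i j
  rw [Algebra.leftMulMatrix_eq_repr_mul]
  fin_cases j
  · simp only [Fin.zero_eta, b0, mul_one]
    rw [hr]
    fin_cases i <;> simp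
  · simp only [Fin.mk_one, b1]
    have : (algebraMap R S x + algebraMap R S y * w) * w =
        algebraMap R S (-103 * y) + algebraMap R S (x + y) * w := by
      simp only [map_add, map_mul, map_neg, map_ofNat]
      linear_combination algebraMap R S y * hw
    rw [this, hr]
    fin_cases i <;> simp

theorem trace_eq (hw : w ^ 2 = w - 103) (b : Module.Basis (Fin 2) R S) (b0 : b 0 = 1) (b1 : b 1 = w)
    (x y : R) : Algebra.trace R S (algebraMap R S x + algebraMap R S y * w) = 2 * x + y := by
  rw [Algebra.trace_eq_matrix_trace b, leftMul w hw b b0 b1, Matrix.trace_fin_two]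
  simp; ring

theorem norm_eq (hw : w ^ 2 = w - 103) (b : Module.Basis (Fin 2) R S) (b0 : b 0 = 1) (b1 : b 1 = w)
    (x y : R) : Algebra.norm R (algebraMap R S x + algebraMap R S y * w) =
      x ^ 2 + x * y + 103 * y ^ 2 := by
  rw [Algebra.norm_eq_matrix_det b, leftMul w hw b b0 b1, Matrix.det_fin_two]
  simp; ring

theorem discr_eq (hw : w ^ 2 = w - 103) (b : Module.Basis (Fin 2) R S) (b0 : b 0 = 1)
    (b1 : b 1 = w) : Algebra.discr R b = -411 := by
  have t00 := trace_eq w hw b b0 b1 1 0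
  have t01 := trace_eq w hw b b0 b1 0 1
  have t11 := trace_eq w hw b b0 b1 (-103) 1
  simp only [map_one, map_zero, map_neg, map_ofNat, zero_mul, add_zero, one_mul, zero_add] at t00 t01 t11
  have e : w * w = -103 + w := by linear_combination hw
  rw [Algebra.discr_def, Matrix.det_fin_two]
  simp only [Algebra.traceMatrix_apply, Algebra.traceForm_apply, b0, b1, one_mul, mul_one]
  rw [e, t00, t01, t11]
  ring
end

theorem rat_span (K : Type*) [Field K] [CharZero K] [Algebra ℚ K] (α : K)
    (hα : α ^ 2 - 205 * α + 10609 = 0)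
    (hgen : IntermediateField.adjoin ℚ {α} = ⊤) (z : K) :
    ∃ a b : ℚ, z = a + b * (α - 102) := by
  have hint : IsIntegral ℚ α := by
    refine ⟨Polynomial.X ^ 2 - 205 * Polynomial.X + 10609, ?_, ?_⟩
    · monicity!
    · simpa using hα
  have h : Algebra.adjoin ℚ {α} = ⊤ := by
    rw [← IntermediateField.adjoin_simple_toSubalgebra_of_isAlgebraic hint.isAlgebraic, hgen]
    rfl
  have hz : z ∈ Algebra.adjoin ℚ {α} := by rw [h]; trivial
  induction hz using Algebra.adjoin_induction with
  | mem x hx =>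
    rw [Set.mem_singleton_iff.1 hx]
    exact ⟨102, 1, by push_cast; ring⟩
  | algebraMap r => exact ⟨r, 0, by simp⟩
  | add x y _ _ hx hy =>
    obtain ⟨a, b, rfl⟩ := hx
    obtain ⟨c, d, rfl⟩ := hy
    exact ⟨a + c, b + d, by push_cast; ring⟩
  | mul x y _ _ hx hy =>
    obtain ⟨a, b, rfl⟩ := hx
    obtain ⟨c, d, rfl⟩ := hy
    refine ⟨a * c - 103 * b * d, a * d + b * c + b * d, ?_⟩
    push_cast
    linear_combination (b * d : K) * hα

theorem rat_ind (K : Type*) [Field K] [CharZero K] (w : K) (hw : w ^ 2 = w - 103) (a b : ℚ)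
    (h : (a : K) + b * w = 0) : a = 0 ∧ b = 0 := by
  by_cases hb : b = 0
  · subst hb
    simpa using h
  · exfalso
    have e : (a : K) ^ 2 + a * b + 103 * b ^ 2 = 0 := by
      linear_combination (a + b - b * w) * h + (b : K) ^ 2 * hw
    have e' : a ^ 2 + a * b + 103 * b ^ 2 = 0 := by exact_mod_cast e
    have : 0 < b ^ 2 := by positivity
    nlinarith [sq_nonneg (2 * a + b)]

theorem rat_int (q : ℚ) (h : IsIntegral ℤ q) : ∃ n : ℤ, q = n := by
  obtain ⟨n, hn⟩ := IsIntegrallyClosed.isIntegral_iff.1 h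
  exact ⟨n, by simpa using hn.symm⟩

theorem int_of_trace_norm (a b : ℚ) (t n : ℤ) (ht : 2 * a + b = t)
    (hn : a ^ 2 + a * b + 103 * b ^ 2 = n) : ∃ x y : ℤ, a = x ∧ b = y := by
  have h1 : (411 * b) ^ 2 = ((411 * (4 * n - t ^ 2) : ℤ) : ℚ) := by
    push_cast
    rw [← ht, ← hn]; ring
  have hi : IsIntegral ℤ (411 * b) := by
    refine IsIntegral.of_pow (n := 2) (by norm_num) ?_
    rw [h1]
    exact isIntegral_algebraMap (R := ℤ) (A := ℚ)
  obtain ⟨c, hc⟩ := rat_int _ hi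
  rw [hc] at h1
  have h2 : c ^ 2 = 411 * (4 * n - t ^ 2) := by exact_mod_cast h1
  have p3 : Prime (3 : ℤ) := by norm_num [Int.prime_iff_natAbs_prime]
  have p137 : Prime (137 : ℤ) := by norm_num [Int.prime_iff_natAbs_prime]
  have d3 : (3 : ℤ) ∣ c := p3.dvd_of_dvd_pow (n := 2) ⟨137 * (4 * n - t ^ 2), by rw [h2]; ring⟩
  have d137 : (137 : ℤ) ∣ c := p137.dvd_of_dvd_pow (n := 2) ⟨3 * (4 * n - t ^ 2), by rw [h2]; ring⟩
  obtain ⟨d, rfl⟩ : (411 : ℤ) ∣ c := by omega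
  have hb : b = d := by
    push_cast at hc
    linarith
  have h3 : t ^ 2 + 411 * d ^ 2 = 4 * n := by linarith
  obtain ⟨k, hk⟩ : (2 : ℤ) ∣ t - d := by
    have : Even (t ^ 2 + 411 * d ^ 2) := by rw [h3]; exact ⟨2 * n, by ring⟩
    have h4 : Even (t - d) := by
      simp only [Int.even_add, Int.even_mul, Int.even_pow, Int.even_sub] at this ⊢
      have h411 : ¬ Even (411 : ℤ) := by decide
      tauto
    exact h4.two_dvd
  refine ⟨k, d, ?_, hb⟩
  have : (t : ℚ) - d = 2 * k := by exact_mod_cast hk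
  linarith

theorem bound : (4 / Real.pi) * ((2 : ℕ).factorial / 2 ^ 2 * √|((-411 : ℤ) : ℝ)|) < 13 := by
  have hpi := Real.pi_gt_d2
  have hs : √|((-411 : ℤ) : ℝ)| < 20.28 := by
    rw [Real.sqrt_lt' (by norm_num)]
    norm_num
  have h0 := Real.sqrt_nonneg |((-411 : ℤ) : ℝ)|
  have : (4 / Real.pi) * ((2 : ℕ).factorial / 2 ^ 2 * √|((-411 : ℤ) : ℝ)|) =
      2 * √|((-411 : ℤ) : ℝ)| / Real.pi := by
    rw [show ((2 : ℕ).factorial : ℝ) = 2 by norm_num [Nat.factorial]]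
    field_simp
    ring
  rw [this, div_lt_iff₀ Real.pi_pos]
  generalize √|((-411 : ℤ) : ℝ)| = q at *
  linarith

theorem main_aux (K : Type*) [Field K] [CharZero K] (w : K) (hw : w ^ 2 = w - 103)
    (hrepK : ∀ z : K, ∃ a b : ℚ, z = a + b * w) :
    Module.finrank ℚ K = 2 ∧ (∀ z : K, IsIntegral ℤ z → ∃ x y : ℤ, z = x + y * w) ∧
    IsCyclic (ClassGroup (integralClosure ℤ K)) ∧
    Nat.card (ClassGroup (integralClosure ℤ K)) = 6 := by
  have hindK := rat_ind K w hw
  obtain ⟨b, b0, b1⟩ := exists_basis (R := ℚ) w (by simpa using hrepK) (by simpa using hindK)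
  have hfr : Module.finrank ℚ K = 2 := by
    rw [Module.finrank_eq_card_basis b]; simp
  have hfin : FiniteDimensional ℚ K := b.finiteDimensional_of_finite
  have hnf : NumberField K := ⟨⟩
  have hI : ∀ z : K, IsIntegral ℤ z → ∃ x y : ℤ, z = x + y * w := by
    intro z hz
    obtain ⟨p, q, rfl⟩ := hrepK z
    obtain ⟨t, ht⟩ := rat_int _ (Algebra.isIntegral_trace (L := ℚ) hz)
    obtain ⟨n, hn⟩ := rat_int _ (Algebra.isIntegral_norm ℚ hz)
    have e1 := trace_eq w hw b b0 b1 p q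
    have e2 := norm_eq w hw b b0 b1 p q
    simp only [eq_ratCast] at e1 e2
    obtain ⟨x, y, rfl, rfl⟩ := int_of_trace_norm p q t n (e1.symm.trans ht) (e2.symm.trans hn)
    exact ⟨x, y, by push_cast; rfl⟩
  have hwi : IsIntegral ℤ w := by
    refine ⟨Polynomial.X ^ 2 - Polynomial.X + 103, ?_, ?_⟩
    · monicity!
    · simp [hw]
  let v : NumberField.RingOfIntegers K := ⟨w, hwi⟩
  have hvw : (v : K) = w := rfl
  have hv : v ^ 2 = v - 103 := by
    apply NumberField.RingOfIntegers.ext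
    have h103 : algebraMap (NumberField.RingOfIntegers K) K 103 = 103 := map_ofNat _ 103
    simpa [hvw, h103] using hw
  have hrep : ∀ z : NumberField.RingOfIntegers K, ∃ x y : ℤ, z = x + y * v := by
    intro z
    obtain ⟨x, y, h⟩ := hI z z.isIntegral_coe
    refine ⟨x, y, ?_⟩
    apply NumberField.RingOfIntegers.ext
    simpa [hvw] using h
  have hind : ∀ x y : ℤ, (x : NumberField.RingOfIntegers K) + y * v = 0 → x = 0 ∧ y = 0 := by
    intro x y h
    have h' := congrArg (algebraMap (NumberField.RingOfIntegers K) K) h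
    simp only [map_add, map_mul, map_intCast, map_zero, hvw] at h'
    have := hindK x y (by exact_mod_cast h')
    exact_mod_cast this
  obtain ⟨c, c0, c1⟩ := exists_basis (R := ℤ) v (by simpa using hrep) (by simpa using hind)
  have hdisc : NumberField.discr K = -411 := by
    rw [← NumberField.discr_eq_discr K c, discr_eq v hv c c0 c1]
  have hM : ∀ C : ClassGroup (NumberField.RingOfIntegers K),
      ∃ I : nonZeroDivisors (Ideal (NumberField.RingOfIntegers K)), ClassGroup.mk0 I = C ∧
      absNorm (I : Ideal (NumberField.RingOfIntegers K)) ≠ 0 ∧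
      absNorm (I : Ideal (NumberField.RingOfIntegers K)) ≤ 12 := by
    intro C
    obtain ⟨I, hI1, hI2⟩ := NumberField.exists_ideal_in_class_of_norm_le C
    refine ⟨I, hI1, absNorm_ne_zero_of_nonZeroDivisors I, ?_⟩
    rw [hfr, hdisc] at hI2
    have hc : NumberField.InfinitePlace.nrComplexPlaces K ≤ 1 := by
      have := NumberField.InfinitePlace.card_add_two_mul_card_eq_rank K
      omega
    have h1 : (4 / Real.pi) ^ (NumberField.InfinitePlace.nrComplexPlaces K) ≤ 4 / Real.pi := by
      have h41 : 1 ≤ 4 / Real.pi := by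
        rw [le_div_iff₀ Real.pi_pos]
        linarith [Real.pi_le_four]
      calc _ ≤ (4 / Real.pi) ^ 1 := pow_le_pow_right₀ h41 hc
        _ = _ := pow_one _
    have h2 : (absNorm (I : Ideal (NumberField.RingOfIntegers K)) : ℝ) < 13 := by
      refine lt_of_le_of_lt hI2 (lt_of_le_of_lt ?_ bound)
      have := mul_le_mul_of_nonneg_right h1
        (show 0 ≤ ((2 : ℕ).factorial / 2 ^ 2 * √|((-411 : ℤ) : ℝ)| : ℝ) by positivity)
      exact_mod_cast this
    have h3 : absNorm (I : Ideal (NumberField.RingOfIntegers K)) < 13 := by exact_mod_cast h2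
    omega
  have hfinal := classGroup_aux v hv hrep hind hM
  exact ⟨hfr, hI, hfinal⟩

end Quad411

/-- Let `K = ℚ[X]/(X² − 205X + 10609)` (that is, `K = ℚ(α)` where `α` is a root of
`X² − 205X + 10609`). Then `K` is an imaginary quadratic field, isomorphic to
`ℚ(√−411)`, the subring `ℤ[α]` equals the ring of integers of `K`, and the class
group of `K` is cyclic of order 6. -/
theorem statement_12 (K : Type*) [Field K] [Algebra ℚ K] (α : K)
    (hα : α ^ 2 - 205 * α + 10609 = 0)
    (hgen : IntermediateField.adjoin ℚ {α} = ⊤) :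
    Module.finrank ℚ K = 2 ∧
    (∃ β : K, β ^ 2 = -411) ∧
    Algebra.adjoin ℤ ({α} : Set K) = integralClosure ℤ K ∧
    IsCyclic (ClassGroup (integralClosure ℤ K)) ∧
    Nat.card (ClassGroup (integralClosure ℤ K)) = 6 := by
  have hcz : CharZero K := algebraRat.charZero K
  have hw : (α - 102) ^ 2 = (α - 102) - 103 := by linear_combination hα
  obtain ⟨h1, h2, h3, h4⟩ := Quad411.main_aux K (α - 102) hw (Quad411.rat_span K α hα hgen)
  refine ⟨?_, ⟨2 * α - 205, by linear_combination 4 * hα⟩, ?_, h3, h4⟩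
  · convert h1
    exact Subsingleton.elim _ _
  · apply le_antisymm
    · rw [Algebra.adjoin_le_iff, Set.singleton_subset_iff]
      refine ⟨Polynomial.X ^ 2 - 205 * Polynomial.X + 10609, ?_, ?_⟩
      · monicity!
      · simpa using hα
    · intro z hz
      obtain ⟨x, y, rfl⟩ := h2 z hz
      have hm : α ∈ Algebra.adjoin ℤ ({α} : Set K) := Algebra.self_mem_adjoin_singleton ℤ α
      exact add_mem (intCast_mem _ x) (mul_mem (intCast_mem _ y) (sub_mem hm (ofNat_mem _ 102)))
end
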